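/- arXiv:2310.00494 — 6 statements merged into one kernel-verified Lean document; each statement's English description precedes it below -/
import Mathlib

section
/- For every d ≥ 1 and every 1 ≤ b ≤ d, the twin star graph TS_d(2b-1,2b) is a spanning tree of the complete graph K_{2d} (it is connected, acyclic, and has exactly 2d-1 edges), its edge set equals {(i,j) : 1 ≤ i < j ≤ 2d, ind(i,j) = b}, and the tuple (TS_d(1,2), TS_d(3,4), ..., TS_d(2d-1,2d)) is a homogeneous cycle-free edge d-partition of K_{2d}. -/
open SimpleGraph

/-- Vertices of `K_{2d}` are `Fin (2*d)`, with `v : Fin (2*d)` representing the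
1-based vertex `v + 1`.  For `i < j`, `indF i j` is the 0-based version of the index
`ind(i+1, j+1)`, where (1-based) `ind(x,y) = ⌈x/2⌉` if `x + y` is even and `⌈y/2⌉` if
`x + y` is odd. -/
def indF {d : ℕ} (i j : Fin (2*d)) : Fin d :=
  if ((i : ℕ) + (j : ℕ)) % 2 = 0 then ⟨(i : ℕ) / 2, by have := i.isLt; omega⟩
  else ⟨(j : ℕ) / 2, by have := j.isLt; omega⟩

/-- Column indices of a `d × d(2d-1)` matrix: pairs `(i,j)` with `i < j` in `Fin (2*d)`. -/
abbrev EdgePair (d : ℕ) := {p : Fin (2*d) × Fin (2*d) // p.1 < p.2}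

def ind {d : ℕ} (e : EdgePair d) : Fin d := indF e.val.1 e.val.2

/-- An edge `d`-partition of `K_{2d}`: spanning subgraphs with pairwise disjoint edge
sets whose union is the edge set of the complete graph. -/
def IsEdgePartition {d : ℕ} (Γ : Fin d → SimpleGraph (Fin (2*d))) : Prop :=
  (∀ a b : Fin d, a ≠ b → Disjoint (Γ a).edgeSet (Γ b).edgeSet) ∧
  (⋃ a : Fin d, (Γ a).edgeSet) = (⊤ : SimpleGraph (Fin (2*d))).edgeSet

/-- A homogeneous cycle-free edge `d`-partition of `K_{2d}`. -/
def IsHCFPartition {d : ℕ} (Γ : Fin d → SimpleGraph (Fin (2*d))) : Prop :=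
  IsEdgePartition Γ ∧ (∀ a b : Fin d, (Γ a).edgeSet.ncard = (Γ b).edgeSet.ncard) ∧
  (∀ a : Fin d, (Γ a).IsAcyclic)

/-- The edge `d`-partition `Γ^E` associated with `E^{(2)}_d`:
`E(Γ^E_a) = {(i,j) : i < j, ind(i,j) = a}`. -/
def GammaE (d : ℕ) (a : Fin d) : SimpleGraph (Fin (2*d)) :=
  SimpleGraph.fromEdgeSet {e | ∃ i j : Fin (2*d), i < j ∧ indF i j = a ∧ e = s(i,j)}

-- The monomial `M_Γ(A) = ∏_{a=1}^d ∏_{(i,j) ∈ E(Γ_a)} A^a_{i,j}`.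
open scoped Classical in
noncomputable def MGamma {d : ℕ} {k : Type*} [Field k]
    (Γ : Fin d → SimpleGraph (Fin (2*d))) (A : Fin d → EdgePair d → k) : k :=
  ∏ a : Fin d, ∏ e : EdgePair d, if (Γ a).Adj e.val.1 e.val.2 then A a e else 1

/-- `A` is `S²`-upper triangular: entries strictly below the `S²`-diagonal vanish. -/
def S2UpperTriangular {d : ℕ} {k : Type*} [Field k] (A : Fin d → EdgePair d → k) : Prop :=
  ∀ (r : Fin d) (e : EdgePair d), ind e < r → A r e = 0

/-- `A` is `S²`-lower triangular: entries strictly above the `S²`-diagonal vanish. -/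
def S2LowerTriangular {d : ℕ} {k : Type*} [Field k] (A : Fin d → EdgePair d → k) : Prop :=
  ∀ (r : Fin d) (e : EdgePair d), r < ind e → A r e = 0

/-- The matrix form `I^{S²}_d` of `E^{(2)}_d`. -/
def IS2 (d : ℕ) (k : Type*) [Field k] : Fin d → EdgePair d → k :=
  fun r e => if r = ind e then 1 else 0

/-- The twin star graph TS_d(2b-1, 2b) (0-based: star centers 2b and 2b+1),
with its left legs, central edge, and right legs. -/
def TS (d : ℕ) (b : Fin d) : SimpleGraph (Fin (2*d)) :=
  SimpleGraph.fromEdgeSet {e | ∃ i j : Fin (2*d), i < j ∧ e = s(i,j) ∧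
    ((∃ a : Fin d, a < b ∧ (i : ℕ) = 2*a+1 ∧ (j : ℕ) = 2*b) ∨
     (∃ c : Fin d, b < c ∧ (i : ℕ) = 2*b ∧ (j : ℕ) = 2*c) ∨
     ((i : ℕ) = 2*b ∧ (j : ℕ) = 2*b+1) ∨
     (∃ a : Fin d, a < b ∧ (i : ℕ) = 2*a ∧ (j : ℕ) = 2*b+1) ∨
     (∃ c : Fin d, b < c ∧ (i : ℕ) = 2*b+1 ∧ (j : ℕ) = 2*c+1))}

/-!
Send every vertex of `TS d b` other than the two centers to the center it hangs from, the right
center `2b + 1` to the left center `2b`, and `2b` to itself. The edges of `TS d b` are exactly the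
pairs `{v, parent v}`, and two steps of `parent` lead from any vertex to `2b`. Hence `TS d b` is
connected and has at most as many edges as there are vertices other than `2b`, so it is a tree.
Since moreover `i < j` are adjacent in `TS d b` if and only if `indF i j = b`, the twin star
graphs are the color classes of an edge coloring of the complete graph.
-/

section General

variable {V : Type*}

lemma mem_edgeSet_iff_exists_lt [LinearOrder V] {G : SimpleGraph V} {e : Sym2 V} :
    e ∈ G.edgeSet ↔ ∃ i j, i < j ∧ G.Adj i j ∧ e = s(i, j) := by
  constructor
  · induction e using Sym2.inductionOn with | hf u v
    intro huv
    rcases lt_or_gt_of_ne huv.ne with hlt | hlt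
    · exact ⟨u, v, hlt, huv, rfl⟩
    · exact ⟨v, u, hlt, huv.symm, Sym2.eq_swap⟩
  · rintro ⟨i, j, -, hij, rfl⟩
    exact hij

variable {p : V → V} {r : V}

lemma connected_fromRel_of_iterate_eq (hp : ∀ v, ∃ n, p^[n] v = r) :
    (fromRel fun u v => p u = v).Connected := by
  have reachable_apply (v : V) : (fromRel fun u v => p u = v).Reachable v (p v) := by
    by_cases hv : v = p v
    · rw [← hv]
    · exact Adj.reachable ⟨hv, Or.inl rfl⟩
  have reachable_iterate (n : ℕ) (v : V) :
      (fromRel fun u v => p u = v).Reachable v (p^[n] v) := by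
    induction n generalizing v with
    | zero => rfl
    | succ n ih => exact (reachable_apply v).trans (ih (p v))
  refine (connected_iff_exists_forall_reachable _).2 ⟨r, fun v => ?_⟩
  obtain ⟨n, rfl⟩ := hp v
  exact (reachable_iterate n v).symm

lemma edgeSet_fromRel_subset_image (hr : p r = r) :
    (fromRel fun u v => p u = v).edgeSet ⊆ (fun v => s(v, p v)) '' {r}ᶜ := by
  intro e he
  induction e using Sym2.inductionOn with | hf u v
  rw [mem_edgeSet, fromRel_adj] at he
  obtain ⟨hne, rfl | rfl⟩ := he
  · exact ⟨u, fun hu : u = r => hne (by rw [hu, hr]), rfl⟩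
  · exact ⟨v, fun hv : v = r => hne (by rw [hv, hr]), Sym2.eq_swap⟩

theorem isTree_fromRel_of_iterate_eq [Finite V] (hr : p r = r) (hp : ∀ v, ∃ n, p^[n] v = r) :
    (fromRel fun u v => p u = v).IsTree := by
  have hconn := connected_fromRel_of_iterate_eq hp
  refine isTree_iff_connected_and_card.2
    ⟨hconn, le_antisymm ?_ hconn.card_vert_le_card_edgeSet_add_one⟩
  calc Nat.card (fromRel fun u v => p u = v).edgeSet + 1
      ≤ ((fun v => s(v, p v)) '' {r}ᶜ).ncard + 1 :=
        Nat.succ_le_succ (Set.ncard_le_ncard (edgeSet_fromRel_subset_image hr))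
    _ ≤ ({r}ᶜ : Set V).ncard + 1 := Nat.succ_le_succ Set.ncard_image_le
    _ = Nat.card V := by rw [← Set.ncard_singleton r, add_comm, Set.ncard_add_ncard_compl]

end General

lemma isEdgePartition_of_adj_iff {d : ℕ} {Γ : Fin d → SimpleGraph (Fin (2 * d))}
    {c : Fin (2 * d) → Fin (2 * d) → Fin d}
    (hΓ : ∀ a ⦃i j⦄, i < j → ((Γ a).Adj i j ↔ c i j = a)) : IsEdgePartition Γ := by
  constructor
  · intro a b hab
    refine Set.disjoint_left.2 fun e ha hb => hab ?_
    obtain ⟨i, j, hij, hadj, rfl⟩ := mem_edgeSet_iff_exists_lt.1 ha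
    exact ((hΓ a hij).1 hadj).symm.trans ((hΓ b hij).1 hb)
  · refine Set.Subset.antisymm (Set.iUnion_subset fun a => edgeSet_mono le_top) fun e he => ?_
    obtain ⟨i, j, hij, -, rfl⟩ := mem_edgeSet_iff_exists_lt.1 he
    exact Set.mem_iUnion.2 ⟨c i j, (hΓ (c i j) hij).2 rfl⟩

lemma indF_eq_iff {d : ℕ} {i j : Fin (2 * d)} {b : Fin d} :
    indF i j = b ↔ ((i : ℕ) + j) % 2 = 0 ∧ (i : ℕ) / 2 = b ∨
      ((i : ℕ) + j) % 2 = 1 ∧ (j : ℕ) / 2 = b := by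
  unfold indF
  split_ifs <;> simp only [Fin.ext_iff] <;> omega

namespace TS

variable {d : ℕ}

lemma adj_iff {b : Fin d} {i j : Fin (2 * d)} (hij : i < j) :
    (TS d b).Adj i j ↔ indF i j = b := by
  rw [indF_eq_iff]
  constructor
  · rintro ⟨⟨i', j', hij', he, hleg⟩, -⟩
    obtain ⟨rfl, rfl⟩ | ⟨rfl, rfl⟩ := Sym2.eq_iff.1 he
    · rcases hleg with ⟨a, ha⟩ | ⟨c, hc⟩ | hcentral | ⟨a, ha⟩ | ⟨c, hc⟩ <;> omega
    · exact absurd hij' hij.not_gt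
  · intro hind
    let a : Fin d := ⟨i / 2, by omega⟩
    let c : Fin d := ⟨j / 2, by omega⟩
    have hlegs : (a < b ∧ (i : ℕ) = 2 * a + 1 ∧ (j : ℕ) = 2 * b) ∨
        (b < c ∧ (i : ℕ) = 2 * b ∧ (j : ℕ) = 2 * c) ∨
        ((i : ℕ) = 2 * b ∧ (j : ℕ) = 2 * b + 1) ∨
        (a < b ∧ (i : ℕ) = 2 * a ∧ (j : ℕ) = 2 * b + 1) ∨
        (b < c ∧ (i : ℕ) = 2 * b + 1 ∧ (j : ℕ) = 2 * c + 1) := by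
      simp only [a, c, Fin.lt_def] at hij ⊢
      omega
    exact ⟨⟨i, j, hij, rfl, hlegs.imp (⟨a, ·⟩) <| Or.imp (⟨c, ·⟩) <| Or.imp id <|
      Or.imp (⟨a, ·⟩) (⟨c, ·⟩)⟩, hij.ne⟩

/-- The parent function of the twin star graph, seen as a tree rooted at its left center `2b`.
A vertex below both centers hangs from the center of the opposite parity, a vertex above both from
the center of the same parity; the root is its own parent. -/
def parent (b : Fin d) (v : Fin (2 * d)) : Fin (2 * d) :=
  if (v : ℕ) = 2 * b + 1 ∨ ((v : ℕ) < 2 * b ↔ (v : ℕ) % 2 = 1) then ⟨2 * b, by omega⟩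
  else ⟨2 * b + 1, by omega⟩

lemma val_parent (b : Fin d) (v : Fin (2 * d)) :
    (parent b v : ℕ) =
      if (v : ℕ) = 2 * b + 1 ∨ ((v : ℕ) < 2 * b ↔ (v : ℕ) % 2 = 1) then 2 * (b : ℕ)
      else 2 * b + 1 :=
  apply_ite Fin.val _ _ _

lemma eq_fromRel_parent (b : Fin d) : TS d b = fromRel fun u v => parent b u = v := by
  ext u v
  wlog huv : u < v generalizing u v
  · obtain rfl | hvu := eq_or_lt_of_not_gt huv
    · simp only [SimpleGraph.irrefl]
    · rw [adj_comm, this v u hvu, adj_comm]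
  rw [adj_iff huv, indF_eq_iff, fromRel_adj]
  simp only [ne_eq, Fin.ext_iff, val_parent]
  split_ifs <;> omega

theorem isTree (b : Fin d) : (TS d b).IsTree := by
  let root : Fin (2 * d) := ⟨2 * b, by omega⟩
  have parent_root : parent b root = root := by
    simp only [root, Fin.ext_iff, val_parent]
    split_ifs <;> omega
  have parent_parent (v : Fin (2 * d)) : parent b (parent b v) = root := by
    simp only [root, Fin.ext_iff, val_parent]
    split_ifs <;> omega
  rw [eq_fromRel_parent]
  exact isTree_fromRel_of_iterate_eq parent_root fun v => ⟨2, parent_parent v⟩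

lemma ncard_edgeSet (b : Fin d) : (TS d b).edgeSet.ncard = 2 * d - 1 := by
  have hcard := (isTree_iff_connected_and_card.1 (isTree b)).2
  rw [Nat.card_coe_set_eq, Nat.card_fin] at hcard
  omega

lemma edgeSet_eq (b : Fin d) :
    (TS d b).edgeSet = {e | ∃ i j : Fin (2 * d), i < j ∧ indF i j = b ∧ e = s(i, j)} := by
  ext e
  rw [mem_edgeSet_iff_exists_lt]
  exact exists₂_congr fun i j => and_congr_right fun hij => and_congr_left' (adj_iff hij)

theorem isHCFPartition (d : ℕ) : IsHCFPartition (TS d) :=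
  ⟨isEdgePartition_of_adj_iff fun _ _ _ => adj_iff,
    fun a b => (ncard_edgeSet a).trans (ncard_edgeSet b).symm,
    fun a => (isTree a).isAcyclic⟩

end TS

/-- For every d ≥ 1 and b, the twin star graph TS_d(2b-1,2b) is a spanning tree of
K_{2d} (connected, acyclic, with exactly 2d - 1 edges), its edge set is
{(i,j) : i < j, ind(i,j) = b}, and (TS_d(1,2), …, TS_d(2d-1,2d)) is a homogeneous
cycle-free edge d-partition of K_{2d}. -/
theorem twin_star_spanning_tree_partition (d : ℕ) (hd : 1 ≤ d) (b : Fin d) :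
    (TS d b).Connected ∧ (TS d b).IsAcyclic ∧ (TS d b).edgeSet.ncard = 2*d - 1 ∧
    (TS d b).edgeSet = {e | ∃ i j : Fin (2*d), i < j ∧ indF i j = b ∧ e = s(i,j)} ∧
    IsHCFPartition (fun b' : Fin d => TS d b') :=
  ⟨(TS.isTree b).connected, (TS.isTree b).isAcyclic, TS.ncard_edgeSet b, TS.edgeSet_eq b,
    TS.isHCFPartition d⟩
end

section
/- Let d ≥ 1, let Γ = (Γ_1,...,Γ_d) be a homogeneous cycle-free edge d-partition of the complete graph K_{2d}, and let 1 ≤ x < y < z ≤ 2d. Then there exists a unique homogeneous cycle-free edge d-partition Λ = (Λ_1,...,Λ_d) of K_{2d} with Λ ≠ Γ such that for every edge (i,j) of K_{2d} other than (x,y), (x,z), (y,z), the edge (i,j) belongs to Λ_a if and only if it belongs to Γ_a (for every 1 ≤ a ≤ d); that is, Λ agrees with Γ on all edges except on the triangle with vertices x, y, z. -/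
open SimpleGraph

/-! Graphs without cycles that partition the edges of `K_{2d}` into `d` classes of equal size have
`2d - 1` edges each, so they are spanning trees; the argument then applies to spanning trees `Γ a`
partitioning the edges of any graph. Remove the sides of the triangle from every `Γ a`, leaving a
forest `F a`. By the exchange property, adding sides back to `F a` gives a tree if and only if they
are as many as before and none of them has its ends already joined in `F a`; the number of such
forbidden sides is `3`, `1` or `0` according to whether `0`, `1` or `2` sides were removed. So it
remains to count the rearrangements of the colours of the three sides that respect the forbidden
sides. If the colours are distinct, each of them forbids one side, different from its own, and
exactly two of the six permutations are left. If two sides share a colour, a rearrangement amounts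
to a position for the other colour, which forbids one of the three positions. -/

section Partition

variable {V ι κ : Type*}

/-- The graphs `Γ a` partition the edges of `G`; unlike `IsEdgePartition`, this is not restricted
to `K_{2d}`, and it is phrased as every edge having exactly one colour `a`. -/
structure IsPartitionOf (Γ : ι → SimpleGraph V) (G : SimpleGraph V) : Prop where
  le : ∀ a, Γ a ≤ G
  existsUnique_mem : ∀ e ∈ G.edgeSet, ∃! a, e ∈ (Γ a).edgeSet

/-- A partition of the edges of `G` into spanning trees. -/
structure IsSpanningTreePartition (Γ : ι → SimpleGraph V) (G : SimpleGraph V) : Prop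
    extends IsPartitionOf Γ G where
  isTree : ∀ a, (Γ a).IsTree

/-- The family `Γ` with each edge `e i` moved to the graph `c i`. -/
def recolor (Γ : ι → SimpleGraph V) (e : κ → Sym2 V) (c : κ → ι) (a : ι) : SimpleGraph V :=
  (Γ a).deleteEdges (Set.range e) ⊔ fromEdgeSet (e '' (c ⁻¹' {a}))

variable {Γ Λ : ι → SimpleGraph V} {G : SimpleGraph V} {e : κ → Sym2 V} {c c' : κ → ι}

lemma mem_edgeSet_recolor_of_notMem_range {f : Sym2 V} (hf : f ∉ Set.range e) (a : ι) :
    f ∈ (recolor Γ e c a).edgeSet ↔ f ∈ (Γ a).edgeSet := by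
  have hfc : f ∉ e '' (c ⁻¹' {a}) := fun h => hf (Set.image_subset_range _ _ h)
  simp only [recolor, edgeSet_sup, edgeSet_deleteEdges, edgeSet_fromEdgeSet, Set.mem_union,
    Set.mem_sdiff, hf, hfc, not_false_eq_true, and_true, false_and, or_false]

lemma mem_edgeSet_recolor_apply (he : Function.Injective e) {i : κ} (hi : ¬(e i).IsDiag) (a : ι) :
    e i ∈ (recolor Γ e c a).edgeSet ↔ c i = a := by
  simp [recolor, edgeSet_sup, edgeSet_deleteEdges, edgeSet_fromEdgeSet, he.eq_iff, hi]

lemma deleteEdges_recolor (a : ι) :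
    (recolor Γ e c a).deleteEdges (Set.range e) = (Γ a).deleteEdges (Set.range e) := by
  refine edgeSet_injective ?_
  ext f
  simp only [edgeSet_deleteEdges, Set.mem_sdiff]
  exact and_congr_left fun hf => mem_edgeSet_recolor_of_notMem_range hf a

lemma recolor_injective (he : Function.Injective e) (hdiag : ∀ i, ¬(e i).IsDiag) :
    Function.Injective (recolor Γ e) := by
  intro c c' h
  funext i
  have hi : e i ∈ (recolor Γ e c' (c i)).edgeSet :=
    h ▸ (mem_edgeSet_recolor_apply he (hdiag i) (c i)).2 rfl
  exact ((mem_edgeSet_recolor_apply he (hdiag i) (c i)).1 hi).symm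

lemma isPartitionOf_recolor (hΓ : IsPartitionOf Γ G) (he : Function.Injective e)
    (heG : ∀ i, e i ∈ G.edgeSet) : IsPartitionOf (recolor Γ e c) G where
  le a := by
    refine sup_le ((deleteEdges_le _).trans (hΓ.le a)) ?_
    rw [← edgeSet_subset_edgeSet, edgeSet_fromEdgeSet]
    rintro _ ⟨⟨i, -, rfl⟩, -⟩
    exact heG i
  existsUnique_mem f hf := by
    by_cases hfe : f ∈ Set.range e
    · obtain ⟨i, rfl⟩ := hfe
      simp only [mem_edgeSet_recolor_apply he (G.not_isDiag_of_mem_edgeSet hf)]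
      exact existsUnique_eq'
    · simp only [mem_edgeSet_recolor_of_notMem_range hfe]
      exact hΓ.existsUnique_mem f hf

lemma IsPartitionOf.exists_recolor_eq (hΛ : IsPartitionOf Λ G) (he : Function.Injective e)
    (heG : ∀ i, e i ∈ G.edgeSet)
    (h : ∀ a, (Λ a).deleteEdges (Set.range e) = (Γ a).deleteEdges (Set.range e)) :
    ∃ c, recolor Γ e c = Λ := by
  choose c hc hc_unique using fun i => hΛ.existsUnique_mem (e i) (heG i)
  refine ⟨c, funext fun a => edgeSet_injective ?_⟩
  ext f
  by_cases hf : f ∈ Set.range e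
  · obtain ⟨i, rfl⟩ := hf
    rw [mem_edgeSet_recolor_apply he (G.not_isDiag_of_mem_edgeSet (heG i))]
    exact ⟨fun hi => hi ▸ hc i, fun hi => (hc_unique i a hi).symm⟩
  · have hfa : f ∈ (Λ a).edgeSet \ Set.range e ↔ f ∈ (Γ a).edgeSet \ Set.range e := by
      rw [← edgeSet_deleteEdges, ← edgeSet_deleteEdges, h]
    rw [mem_edgeSet_recolor_of_notMem_range hf]
    simpa only [Set.mem_sdiff, hf, not_false_eq_true, and_true] using hfa.symm

end Partition

section Tree

variable {V : Type*} {F : SimpleGraph V} {s t u v x y z : V}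

lemma isTree_iff_isAcyclic_and_ncard [Finite V] :
    F.IsTree ↔ F.IsAcyclic ∧ F.edgeSet.ncard + 1 = Nat.card V := by
  refine ⟨fun h => ⟨h.isAcyclic, (isTree_iff_connected_and_card.1 h).2⟩, fun ⟨hac, hcard⟩ => ?_⟩
  have : Nonempty V := (Nat.card_pos_iff.1 (hcard ▸ Nat.succ_pos _)).1
  obtain ⟨T, hFT, -, hT⟩ := connected_top.exists_isTree_le_of_le_of_isAcyclic le_top hac
  have hcard' : T.edgeSet.ncard + 1 = Nat.card V := (isTree_iff_connected_and_card.1 hT).2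
  have hFT_eq : F = T := edgeSet_injective
    (Set.eq_of_subset_of_ncard_le (edgeSet_mono hFT) (by omega))
  exact hFT_eq ▸ hT

lemma reachable_of_reachable_sup_edge (h : (F ⊔ edge u v).Reachable s t) :
    F.Reachable s t ∨ (F.Reachable s u ∧ F.Reachable v t) ∨
      (F.Reachable s v ∧ F.Reachable u t) := by
  obtain ⟨w⟩ := h
  induction w with
  | nil => exact Or.inl (Reachable.refl _)
  | @cons a b _ hadj _ ih =>
    rw [sup_adj, edge_adj] at hadj
    rcases hadj with hadj | ⟨⟨rfl, rfl⟩ | ⟨rfl, rfl⟩, -⟩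
    · exact ih.imp hadj.reachable.trans
        (Or.imp (And.imp_left hadj.reachable.trans) (And.imp_left hadj.reachable.trans))
    · rcases ih with ih | ⟨-, ih⟩ | ⟨-, ih⟩
      exacts [Or.inr (Or.inl ⟨.refl _, ih⟩), Or.inr (Or.inl ⟨.refl _, ih⟩), Or.inl ih]
    · rcases ih with ih | ⟨-, ih⟩ | ⟨-, ih⟩
      exacts [Or.inr (Or.inr ⟨.refl _, ih⟩), Or.inl ih, Or.inr (Or.inr ⟨.refl _, ih⟩)]

lemma reachable_sup_edge (F : SimpleGraph V) (u v : V) : (F ⊔ edge u v).Reachable u v := by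
  rcases eq_or_ne u v with rfl | h
  · exact .refl _
  · exact Adj.reachable (Or.inr ((edge_adj ..).2 ⟨Or.inl ⟨rfl, rfl⟩, h⟩))

lemma not_reachable_of_isAcyclic_sup_edge (huv : u ≠ v) (hadj : ¬F.Adj u v)
    (h : (F ⊔ edge u v).IsAcyclic) : ¬F.Reachable u v := fun hreach =>
  ((isAcyclic_sup_fromEdgeSet_iff.1 h).2 hreach).elim huv hadj

/-- The exchange property of the graphic matroid. -/
lemma isTree_sup_edge_of_not_reachable (h : (F ⊔ edge u v).IsTree) (hst : ¬F.Reachable s t) :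
    (F ⊔ edge s t).IsTree := by
  have hF : F.IsAcyclic := h.isAcyclic.anti le_sup_left
  have huv : (F ⊔ edge s t).Reachable u v := by
    have hle : F ≤ F ⊔ edge s t := le_sup_left
    rcases (reachable_of_reachable_sup_edge (h.connected.preconnected s t)).resolve_left hst with
      ⟨hsu, hvt⟩ | ⟨hsv, hut⟩
    · exact ((hsu.mono hle).symm.trans (reachable_sup_edge F s t)).trans (hvt.mono hle).symm
    · exact ((hut.mono hle).trans (reachable_sup_edge F s t).symm).trans (hsv.mono hle)
  have := h.connected.nonempty
  refine ⟨⟨fun a b => ?_⟩, hF.sup_edge_of_not_reachable hst⟩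
  rcases reachable_of_reachable_sup_edge (h.connected.preconnected a b) with
    hab | ⟨ha, hb⟩ | ⟨ha, hb⟩
  · exact hab.mono le_sup_left
  · exact ((ha.mono le_sup_left).trans huv).trans (hb.mono le_sup_left)
  · exact ((ha.mono le_sup_left).trans huv.symm).trans (hb.mono le_sup_left)

lemma reachable_left_iff_not_reachable_right (hxy : ¬F.Reachable x y)
    (h : (F ⊔ edge x y).Connected) : F.Reachable x z ↔ ¬F.Reachable y z := by
  refine ⟨fun hxz hyz => hxy (hxz.trans hyz.symm), fun hyz => ?_⟩
  rcases reachable_of_reachable_sup_edge (h.preconnected x z) with hxz | ⟨-, hyz'⟩ | ⟨hxy', -⟩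
  exacts [hxz, absurd hyz' hyz, absurd hxy' hxy]

lemma not_reachable_sup_edge_of_isAcyclic (hyz : y ≠ z) (hxz : x ≠ z) (hadj : ¬F.Adj x z)
    (h : (F ⊔ edge x y ⊔ edge x z).IsAcyclic) : ¬(F ⊔ edge x y).Reachable x z := by
  refine not_reachable_of_isAcyclic_sup_edge hxz ?_ h
  rw [sup_adj, edge_adj]
  grind

end Tree

section SidePattern

lemma forall_ncard_preimage_eq_iff {α β : Type*} [Finite α] {f g : α → β} :
    (∀ b, (f ⁻¹' {b}).ncard = (g ⁻¹' {b}).ncard) ↔ ∃ σ : Equiv.Perm α, f = g ∘ σ := by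
  constructor
  · intro h
    have e (b : β) : f ⁻¹' {b} ≃ g ⁻¹' {b} :=
      Classical.choice (Finite.card_eq.1 (by simpa only [Nat.card_coe_set_eq] using h b))
    exact ⟨Equiv.ofPreimageEquiv e, funext fun a => (Equiv.ofPreimageEquiv_map e a).symm⟩
  · rintro ⟨σ, rfl⟩ b
    rw [Set.preimage_comp]
    exact Set.ncard_preimage_of_injective_subset_range σ.injective
      (by simp only [EquivLike.range_eq_univ, Set.subset_univ])

lemma fin_three_eq_or_eq_add (i j : Fin 3) : j = i ∨ j = i + 1 ∨ j = i + 2 := by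
  decide +revert

lemma exists_fin_three_ne_ne {i j : Fin 3} (hij : i ≠ j) :
    ∃ k, k ≠ i ∧ k ≠ j ∧ ∀ l, l ≠ i → l ≠ j → l = k := by
  decide +revert

lemma fin_three_compl_singleton (i : Fin 3) : ({i}ᶜ : Set (Fin 3)) = {i + 1, i + 2} := by
  ext j
  simp only [Set.mem_compl_iff, Set.mem_singleton_iff, Set.mem_insert_iff]
  decide +revert

lemma ncard_fin_three_compl_singleton (i : Fin 3) : ({i}ᶜ : Set (Fin 3)).ncard = 2 := by
  rw [fin_three_compl_singleton]
  exact Set.ncard_pair (by decide +revert)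

lemma fin_three_set_cases (S : Set (Fin 3)) :
    S = ∅ ∨ (∃ i, S = {i}) ∨ (∃ i, S = {i}ᶜ) ∨ S = Set.univ := by
  have hcard := Set.ncard_add_ncard_compl S
  rw [Nat.card_eq_fintype_card, Fintype.card_fin] at hcard
  have hle : S.ncard ≤ 3 := by omega
  interval_cases hS : S.ncard
  · exact Or.inl ((Set.ncard_eq_zero).1 hS)
  · exact Or.inr (Or.inl (Set.ncard_eq_one.1 hS))
  · obtain ⟨i, hi⟩ := Set.ncard_eq_one.1 (show Sᶜ.ncard = 1 by omega)
    exact Or.inr (Or.inr (Or.inl ⟨i, by rw [← hi, compl_compl]⟩))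
  · exact Or.inr (Or.inr (Or.inr (Set.compl_empty_iff.1 ((Set.ncard_eq_zero).1 (by omega)))))

lemma existsUnique_perm_fin_three (φ : Fin 3 → Fin 3) (hφ : ∀ i, i ≠ φ i) :
    ∃! σ : Equiv.Perm (Fin 3), σ ≠ 1 ∧ ∀ i, i ≠ φ (σ i) := by
  unfold ExistsUnique
  decide +revert

/-- The possible values of the set `S` of sides of a triangle in a spanning tree and of the set `J`
of sides whose ends the rest of the tree joins; a side bears the number of the opposite vertex. -/
def IsSidePattern (S J : Set (Fin 3)) : Prop :=
  (S = ∅ ∧ J = Set.univ) ∨ (∃ i j, i ≠ j ∧ S = {i} ∧ J = {j}) ∨ ∃ i, S = {i}ᶜ ∧ J = ∅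

variable {S T : Set (Fin 3)}

namespace IsSidePattern

variable {J : Set (Fin 3)} {i : Fin 3}

lemma disjoint (h : IsSidePattern S J) : Disjoint S J := by
  rcases h with ⟨rfl, -⟩ | ⟨i, j, hij, rfl, rfl⟩ | ⟨-, -, rfl⟩
  exacts [disjoint_bot_left, Set.disjoint_singleton.2 hij, disjoint_bot_right]

lemma eq_empty (h : IsSidePattern {i}ᶜ J) : J = ∅ := by
  have hi := ncard_fin_three_compl_singleton i
  rcases h with ⟨h, -⟩ | ⟨j, -, -, h, -⟩ | ⟨-, -, hJ⟩
  · simp only [h, Set.ncard_empty, OfNat.zero_ne_ofNat] at hi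
  · simp only [h, Set.ncard_singleton, OfNat.one_ne_ofNat] at hi
  · exact hJ

lemma exists_eq_singleton (h : IsSidePattern {i} J) : ∃ j, i ≠ j ∧ J = {j} := by
  rcases h with ⟨h, -⟩ | ⟨j, k, hjk, h, rfl⟩ | ⟨j, h, -⟩
  · exact absurd h (Set.singleton_ne_empty i)
  · exact ⟨k, Set.singleton_injective h ▸ hjk, rfl⟩
  · have hj := ncard_fin_three_compl_singleton j
    simp only [← h, Set.ncard_singleton, OfNat.one_ne_ofNat] at hj

lemma ncard_eq (hT : IsSidePattern T J) (hS : IsSidePattern S J) : T.ncard = S.ncard := by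
  have key {U : Set (Fin 3)} (h : IsSidePattern U J) :
      (U.ncard = 0 ∧ J.ncard = 3) ∨ (U.ncard = 1 ∧ J.ncard = 1) ∨ (U.ncard = 2 ∧ J.ncard = 0) := by
    rcases h with ⟨rfl, rfl⟩ | ⟨i, j, -, rfl, rfl⟩ | ⟨i, rfl, rfl⟩
    · exact Or.inl ⟨Set.ncard_empty _, by simp only [Set.ncard_univ, Nat.card_fin]⟩
    · exact Or.inr (Or.inl ⟨Set.ncard_singleton _, Set.ncard_singleton _⟩)
    · exact Or.inr (Or.inr ⟨ncard_fin_three_compl_singleton _, Set.ncard_empty _⟩)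
  have := key hT
  have := key hS
  omega

end IsSidePattern

variable {ι : Type*} {c : Fin 3 → ι} {J : ι → Set (Fin 3)}

lemma existsUnique_perm_of_injective (h : ∀ a, IsSidePattern (c ⁻¹' {a}) (J a))
    (hc : Function.Injective c) :
    ∃! c', (∃ σ : Equiv.Perm (Fin 3), c' = c ∘ σ) ∧ (∀ i, i ∉ J (c' i)) ∧ c' ≠ c := by
  have hfib (i : Fin 3) : c ⁻¹' {c i} = {i} := by
    rw [← Set.image_singleton, Set.preimage_image_eq _ hc]
  choose φ hφ hJ using fun i => (hfib i ▸ h (c i)).exists_eq_singleton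
  obtain ⟨σ, ⟨hσ, hσφ⟩, hunique⟩ := existsUnique_perm_fin_three φ hφ
  refine ⟨c ∘ σ, ⟨⟨σ, rfl⟩, fun i => ?_, fun h => hσ ?_⟩, ?_⟩
  · simpa only [Function.comp_apply, hJ, Set.mem_singleton_iff] using hσφ i
  · exact Equiv.ext fun i => hc (congrFun h i)
  · rintro _ ⟨⟨τ, rfl⟩, hτ, hτc⟩
    have hτ1 : τ ≠ 1 := fun h => hτc (by rw [h, Equiv.Perm.coe_one, Function.comp_id])
    rw [hunique τ ⟨hτ1, fun i => ?_⟩]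
    simpa only [Function.comp_apply, hJ, Set.mem_singleton_iff] using hτ i

lemma exists_forall_apply_eq_iff_ne (h : ∀ a, IsSidePattern (c ⁻¹' {a}) (J a))
    (hc : ¬Function.Injective c) : ∃ b l, ∀ i, c i = b ↔ i ≠ l := by
  obtain ⟨i, j, hij, hne⟩ := Function.not_injective_iff.1 hc
  refine ⟨c j, ?_⟩
  have hi : i ∈ c ⁻¹' {c j} := hij
  have hj : j ∈ c ⁻¹' {c j} := rfl
  rcases h (c j) with ⟨hS, -⟩ | ⟨k, -, -, hS, -⟩ | ⟨l, hS, -⟩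
  · exact absurd (hS ▸ hj) (Set.notMem_empty j)
  · rw [hS] at hi hj
    exact absurd (hi.trans hj.symm) hne
  · exact ⟨l, fun k => Set.ext_iff.1 hS k⟩

lemma existsUnique_perm_of_not_injective (h : ∀ a, IsSidePattern (c ⁻¹' {a}) (J a))
    (hc : ¬Function.Injective c) :
    ∃! c', (∃ σ : Equiv.Perm (Fin 3), c' = c ∘ σ) ∧ (∀ i, i ∉ J (c' i)) ∧ c' ≠ c := by
  obtain ⟨b, l, hb⟩ := exists_forall_apply_eq_iff_ne h hc
  have hl : c l ≠ b := fun hl => (hb l).1 hl rfl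
  have hext {i j : Fin 3} (hij : i = l ↔ j = l) : c i = c j := by grind
  have hJb : J b = ∅ := by
    have hfib : c ⁻¹' {b} = {l}ᶜ := Set.ext hb
    exact (hfib ▸ h b).eq_empty
  obtain ⟨k, hlk, hJl⟩ : ∃ k, l ≠ k ∧ J (c l) = {k} := by
    have hfib : c ⁻¹' {c l} = {l} := Set.ext fun i => show c i = c l ↔ i = l by grind
    exact (hfib ▸ h (c l)).exists_eq_singleton
  -- `c ∘ σ` is determined by the position of the colour `c l`, which can be neither `k` nor `l`.
  obtain ⟨m, hml, hmk, hm⟩ := exists_fin_three_ne_ne hlk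
  have hswap (i : Fin 3) : Equiv.swap l m i = l ↔ i = m := by
    rw [Equiv.swap_apply_eq_iff, Equiv.swap_apply_left]
  refine ⟨c ∘ Equiv.swap l m, ⟨⟨_, rfl⟩, fun i => ?_, fun heq => ?_⟩, ?_⟩
  · by_cases hi : i = m
    · subst hi
      simpa only [Function.comp_apply, Equiv.swap_apply_right, hJl, Set.mem_singleton_iff] using hmk
    · have hi : c (Equiv.swap l m i) = b := (hb _).2 (mt (hswap i).1 hi)
      simp only [Function.comp_apply, hi, hJb, Set.mem_empty_iff_false, not_false_eq_true]
  · have hcm : c m = c l := by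
      simpa only [Function.comp_apply, Equiv.swap_apply_left] using congrFun heq l
    exact hl (hcm ▸ (hb m).2 hml)
  · rintro _ ⟨⟨τ, rfl⟩, hτ, hτc⟩
    obtain ⟨p, hp⟩ := τ.surjective l
    have hτp (i : Fin 3) : τ i = l ↔ i = p := hp ▸ τ.injective.eq_iff
    have hpk : p ≠ k := by
      simpa only [Function.comp_apply, hp, hJl, Set.mem_singleton_iff] using hτ p
    have hpl : p ≠ l := by
      rintro rfl
      exact hτc (funext fun i => hext (hτp i))
    obtain rfl := hm p hpl hpk
    exact funext fun i => hext ((hτp i).trans (hswap i).symm)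

lemma existsUnique_rearrangement (h : ∀ a, IsSidePattern (c ⁻¹' {a}) (J a)) :
    ∃! c' : Fin 3 → ι,
      (∀ a, (c' ⁻¹' {a}).ncard = (c ⁻¹' {a}).ncard ∧ Disjoint (c' ⁻¹' {a}) (J a)) ∧ c' ≠ c := by
  have hdisj (c' : Fin 3 → ι) : (∀ a, Disjoint (c' ⁻¹' {a}) (J a)) ↔ ∀ i, i ∉ J (c' i) := by
    simp only [Set.disjoint_left, Set.mem_preimage, Set.mem_singleton_iff, forall_comm (α := ι),
      forall_eq']
  simp only [forall_and, forall_ncard_preimage_eq_iff, hdisj, and_assoc]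
  by_cases hc : Function.Injective c
  · exact existsUnique_perm_of_injective h hc
  · exact existsUnique_perm_of_not_injective h hc

end SidePattern

section Triangle

variable {V : Type*} {F : SimpleGraph V} {v : Fin 3 → V} {S T : Set (Fin 3)}

/-- The side opposite to the vertex `v i` of the triangle with vertices `v 0`, `v 1`, `v 2`; the
indices are added modulo `3`. -/
def side (v : Fin 3 → V) (i : Fin 3) : Sym2 V := s(v (i + 1), v (i + 2))

/-- The graph `F` with the sides in `S` of the triangle `v` added. -/
def addSides (F : SimpleGraph V) (v : Fin 3 → V) (S : Set (Fin 3)) : SimpleGraph V :=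
  F ⊔ fromEdgeSet (side v '' S)

/-- The sides of the triangle `v` whose ends are already joined in `F`, so that adding such a side
to `F` closes a cycle. -/
def closedSides (F : SimpleGraph V) (v : Fin 3 → V) : Set (Fin 3) :=
  {i | F.Reachable (v (i + 1)) (v (i + 2))}

lemma side_add_one (v : Fin 3 → V) (i : Fin 3) : side v (i + 1) = s(v (i + 2), v i) := by
  fin_cases i <;> rfl

lemma side_add_two (v : Fin 3 → V) (i : Fin 3) : side v (i + 2) = s(v i, v (i + 1)) := by
  fin_cases i <;> rfl

lemma side_injective (hdiag : ∀ i, ¬(side v i).IsDiag) : Function.Injective (side v) := by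
  have h0 : v 1 ≠ v 2 := hdiag 0
  have h1 : v 2 ≠ v 0 := hdiag 1
  have h2 : v 0 ≠ v 1 := hdiag 2
  intro i j hij
  fin_cases i <;> fin_cases j <;> simp_all [side]

lemma range_side (v : Fin 3 → V) :
    Set.range (side v) = {s(v 0, v 1), s(v 0, v 2), s(v 1, v 2)} := by
  have huniv : (Set.univ : Set (Fin 3)) = {2, 1, 0} := by
    refine (Set.eq_univ_of_forall fun i => ?_).symm
    simp only [Set.mem_insert_iff, Set.mem_singleton_iff]
    decide +revert
  rw [← Set.image_univ, huniv, Set.image_insert_eq, Set.image_pair,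
    Sym2.eq_swap (a := v 0) (b := v 2)]
  rfl

lemma addSides_empty : addSides F v ∅ = F := by
  simp only [addSides, Set.image_empty, fromEdgeSet_empty, sup_bot_eq]

lemma addSides_singleton (i : Fin 3) : addSides F v {i} = F ⊔ edge (v (i + 1)) (v (i + 2)) := by
  rw [addSides, Set.image_singleton]
  rfl

lemma addSides_compl_singleton (i : Fin 3) :
    addSides F v {i}ᶜ = F ⊔ edge (v i) (v (i + 1)) ⊔ edge (v i) (v (i + 2)) := by
  rw [addSides, fin_three_compl_singleton, Set.image_pair, side_add_one, side_add_two,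
    Sym2.eq_swap, Set.pair_comm, ← Set.singleton_union, fromEdgeSet_union, sup_assoc]
  rfl

lemma addSides_compl_singleton_add_one (i : Fin 3) :
    addSides F v {i + 1}ᶜ = F ⊔ edge (v i) (v (i + 1)) ⊔ edge (v (i + 1)) (v (i + 2)) := by
  rw [addSides_compl_singleton, sup_right_comm, edge_comm (v i)]
  fin_cases i <;> rfl

lemma closedSides_eq_univ (h : F.Connected) : closedSides F v = Set.univ :=
  Set.eq_univ_of_forall fun _ => h.preconnected _ _

lemma mem_closedSides_add_one (i : Fin 3) :
    i + 1 ∈ closedSides F v ↔ F.Reachable (v (i + 2)) (v i) := by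
  fin_cases i <;> rfl

lemma mem_closedSides_add_two (i : Fin 3) :
    i + 2 ∈ closedSides F v ↔ F.Reachable (v i) (v (i + 1)) := by
  fin_cases i <;> rfl

lemma not_isAcyclic_addSides_univ (hdiag : ∀ i, ¬(side v i).IsDiag) :
    ¬(addSides F v Set.univ).IsAcyclic := by
  classical
  have hadj (i : Fin 3) : side v i ∈ (addSides F v Set.univ).edgeSet := by
    rw [addSides, edgeSet_sup, edgeSet_fromEdgeSet]
    exact Or.inr ⟨Set.mem_image_of_mem _ (Set.mem_univ i), hdiag i⟩
  exact fun h => h.cliqueFree le_rfl {v 0, v 1, v 2}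
    (is3Clique_triple_iff.2 ⟨hadj 2, (hadj 1).symm, hadj 0⟩)

section

variable (hdiag : ∀ i, ¬(side v i).IsDiag) (hF : ∀ i, side v i ∉ F.edgeSet)
include hdiag hF

lemma exists_closedSides_eq_singleton {i : Fin 3} (h : (addSides F v {i}).IsTree) :
    ∃ j, i ≠ j ∧ closedSides F v = {j} := by
  rw [addSides_singleton] at h
  have hi : i ∉ closedSides F v :=
    not_reachable_of_isAcyclic_sup_edge (hdiag i) (hF i) h.isAcyclic
  have hsplit : i + 2 ∈ closedSides F v ↔ i + 1 ∉ closedSides F v := by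
    rw [mem_closedSides_add_one, mem_closedSides_add_two, reachable_comm]
    exact reachable_left_iff_not_reachable_right hi h.connected
  have hne (k : Fin 3) : k + 1 ≠ k + 2 ∧ k ≠ k + 1 ∧ k ≠ k + 2 := by decide +revert
  by_cases h₁ : i + 1 ∈ closedSides F v
  · refine ⟨i + 1, (hne i).2.1, Set.ext fun j => ?_⟩
    rcases fin_three_eq_or_eq_add i j with rfl | rfl | rfl <;> grind
  · refine ⟨i + 2, (hne i).2.2, Set.ext fun j => ?_⟩
    rcases fin_three_eq_or_eq_add i j with rfl | rfl | rfl <;> grind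

lemma not_reachable_sup_edge {i : Fin 3} (h : (addSides F v {i}ᶜ).IsAcyclic) :
    ¬(F ⊔ edge (v i) (v (i + 1))).Reachable (v i) (v (i + 2)) := by
  rw [addSides_compl_singleton] at h
  have hadj : s(v (i + 2), v i) ∉ F.edgeSet := side_add_one v i ▸ hF (i + 1)
  have hne : ¬s(v (i + 2), v i).IsDiag := side_add_one v i ▸ hdiag (i + 1)
  exact not_reachable_sup_edge_of_isAcyclic (hdiag i) (Ne.symm hne) (fun h => hadj h.symm) h

lemma closedSides_eq_empty {i : Fin 3} (h : (addSides F v {i}ᶜ).IsAcyclic) :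
    closedSides F v = ∅ := by
  have hle : F ≤ F ⊔ edge (v i) (v (i + 1)) := le_sup_left
  have hxz := not_reachable_sup_edge hdiag hF h
  rw [addSides_compl_singleton] at h
  refine Set.eq_empty_of_forall_notMem fun j hj => ?_
  rcases fin_three_eq_or_eq_add i j with rfl | rfl | rfl
  · exact hxz ((reachable_sup_edge F _ _).trans (Reachable.mono hle hj))
  · exact hxz (((mem_closedSides_add_one i).1 hj).symm.mono hle)
  · have hadj : s(v i, v (i + 1)) ∉ F.edgeSet := side_add_two v i ▸ hF (i + 2)
    have hne : ¬s(v i, v (i + 1)).IsDiag := side_add_two v i ▸ hdiag (i + 2)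
    exact not_reachable_of_isAcyclic_sup_edge hne hadj (h.anti le_sup_left)
      ((mem_closedSides_add_two i).1 hj)

lemma isTree_addSides_compl_singleton_add_one {i : Fin 3} (h : (addSides F v {i}ᶜ).IsTree) :
    (addSides F v {i + 1}ᶜ).IsTree := by
  have hxz := not_reachable_sup_edge hdiag hF h.isAcyclic
  rw [addSides_compl_singleton] at h
  rw [addSides_compl_singleton_add_one]
  exact isTree_sup_edge_of_not_reachable h fun hyz => hxz ((reachable_sup_edge F _ _).trans hyz)

lemma isTree_addSides_compl_singleton {i : Fin 3} (h : (addSides F v {i}ᶜ).IsTree) (j : Fin 3) :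
    (addSides F v {j}ᶜ).IsTree := by
  have h₁ := isTree_addSides_compl_singleton_add_one hdiag hF h
  rcases fin_three_eq_or_eq_add i j with rfl | rfl | rfl
  · exact h
  · exact h₁
  · have h₂ := isTree_addSides_compl_singleton_add_one hdiag hF h₁
    rwa [add_assoc] at h₂

lemma isSidePattern_closedSides (h : (addSides F v S).IsTree) :
    IsSidePattern S (closedSides F v) := by
  rcases fin_three_set_cases S with rfl | ⟨i, rfl⟩ | ⟨i, rfl⟩ | rfl
  · rw [addSides_empty] at h
    exact Or.inl ⟨rfl, closedSides_eq_univ h.connected⟩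
  · obtain ⟨j, hij, hj⟩ := exists_closedSides_eq_singleton hdiag hF h
    exact Or.inr (Or.inl ⟨i, j, hij, rfl, hj⟩)
  · exact Or.inr (Or.inr ⟨i, rfl, closedSides_eq_empty hdiag hF h.isAcyclic⟩)
  · exact absurd h.isAcyclic (not_isAcyclic_addSides_univ hdiag)

lemma isTree_addSides_iff (h : (addSides F v S).IsTree) :
    (addSides F v T).IsTree ↔ T.ncard = S.ncard ∧ Disjoint T (closedSides F v) := by
  have hS := isSidePattern_closedSides hdiag hF h
  constructor
  · intro hT
    have hT := isSidePattern_closedSides hdiag hF hT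
    exact ⟨hT.ncard_eq hS, hT.disjoint⟩
  rintro ⟨hcard, hdisj⟩
  rcases hS with ⟨rfl, -⟩ | ⟨i, -, -, rfl, -⟩ | ⟨i, rfl, -⟩
  · rw [Set.ncard_empty, Set.ncard_eq_zero] at hcard
    rwa [hcard]
  · rw [Set.ncard_singleton] at hcard
    obtain ⟨j, rfl⟩ := Set.ncard_eq_one.1 hcard
    have hj : j ∉ closedSides F v := Set.disjoint_singleton_left.1 hdisj
    rw [addSides_singleton] at h ⊢
    exact isTree_sup_edge_of_not_reachable h hj
  · have hcompl : Tᶜ.ncard = 1 := by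
      have hT := Set.ncard_add_ncard_compl T
      rw [hcard, ncard_fin_three_compl_singleton, Nat.card_fin] at hT
      omega
    obtain ⟨j, hj⟩ := Set.ncard_eq_one.1 hcompl
    rw [← compl_compl T, hj]
    exact isTree_addSides_compl_singleton hdiag hF h j

end

section

variable {ι : Type*} {Γ : ι → SimpleGraph V} {G : SimpleGraph V}

theorem existsUnique_isSpanningTreePartition_ne (hΓ : IsSpanningTreePartition Γ G)
    (hv : ∀ i, side v i ∈ G.edgeSet) :
    ∃! Λ : ι → SimpleGraph V, IsSpanningTreePartition Λ G ∧ Λ ≠ Γ ∧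
      ∀ a, (Λ a).deleteEdges (Set.range (side v)) = (Γ a).deleteEdges (Set.range (side v)) := by
  have hdiag (i : Fin 3) : ¬(side v i).IsDiag := G.not_isDiag_of_mem_edgeSet (hv i)
  have hinj := side_injective hdiag
  set F : ι → SimpleGraph V := fun a => (Γ a).deleteEdges (Set.range (side v))
  have hF (a : ι) (i : Fin 3) : side v i ∉ (F a).edgeSet := by
    rw [edgeSet_deleteEdges]
    exact fun h => h.2 (Set.mem_range_self i)
  obtain ⟨c, hc⟩ := hΓ.exists_recolor_eq hinj hv fun _ => rfl
  have htree (a : ι) : (addSides (F a) v (c ⁻¹' {a})).IsTree := by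
    change (recolor Γ (side v) c a).IsTree
    rw [hc]
    exact hΓ.isTree a
  have hrecolor (c' : Fin 3 → ι) : IsSpanningTreePartition (recolor Γ (side v) c') G ↔
      ∀ a, (c' ⁻¹' {a}).ncard = (c ⁻¹' {a}).ncard ∧
        Disjoint (c' ⁻¹' {a}) (closedSides (F a) v) := by
    simp only [← isTree_addSides_iff hdiag (hF _) (htree _)]
    exact ⟨fun h => h.isTree, fun h => ⟨isPartitionOf_recolor hΓ.toIsPartitionOf hinj hv, h⟩⟩
  have hne (c' : Fin 3 → ι) : recolor Γ (side v) c' ≠ Γ ↔ c' ≠ c := by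
    rw [← (recolor_injective hinj hdiag).ne_iff, hc]
  obtain ⟨c', ⟨hc', hcc'⟩, hunique⟩ :=
    existsUnique_rearrangement fun a => isSidePattern_closedSides hdiag (hF a) (htree a)
  refine ⟨recolor Γ (side v) c',
    ⟨(hrecolor c').2 hc', (hne c').2 hcc', fun a => deleteEdges_recolor a⟩, ?_⟩
  rintro Λ ⟨hΛ, hΛne, hagree⟩
  obtain ⟨c₂, rfl⟩ := hΛ.exists_recolor_eq hinj hv hagree
  rw [hunique c₂ ⟨(hrecolor c₂).1 hΛ, (hne c₂).1 hΛne⟩]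

end

end Triangle

theorem exists_unique_involution_general {V ι : Type*} {G : SimpleGraph V} {Γ : ι → SimpleGraph V}
    (hΓ : IsSpanningTreePartition Γ G) {x y z : V} (hxy : G.Adj x y) (hxz : G.Adj x z)
    (hyz : G.Adj y z) :
    ∃! Λ : ι → SimpleGraph V, IsSpanningTreePartition Λ G ∧ Λ ≠ Γ ∧
      ∀ a, (Λ a).deleteEdges {s(x, y), s(x, z), s(y, z)} =
        (Γ a).deleteEdges {s(x, y), s(x, z), s(y, z)} := by
  have hrange : Set.range (side ![x, y, z]) = {s(x, y), s(x, z), s(y, z)} := range_side _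
  have hside : ∀ i, side ![x, y, z] i ∈ G.edgeSet := by
    simp only [Fin.forall_fin_succ]
    exact ⟨hyz, hxz.symm, hxy, nofun⟩
  rw [← hrange]
  exact existsUnique_isSpanningTreePartition_ne hΓ hside

section CompleteGraph

lemma ncard_edgeSet_top (V : Type*) [Finite V] :
    (⊤ : SimpleGraph V).edgeSet.ncard = (Nat.card V).choose 2 := by
  classical
  have := Fintype.ofFinite V
  rw [← coe_edgeFinset, Set.ncard_coe_finset, card_edgeFinset_top_eq_card_choose_two,
    Nat.card_eq_fintype_card]

variable {d : ℕ} {Γ : Fin d → SimpleGraph (Fin (2 * d))}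

lemma isEdgePartition_iff_isPartitionOf : IsEdgePartition Γ ↔ IsPartitionOf Γ ⊤ := by
  constructor
  · rintro ⟨hdisj, hunion⟩
    refine ⟨fun _ => le_top, fun e he => ?_⟩
    rw [← hunion, Set.mem_iUnion] at he
    obtain ⟨a, ha⟩ := he
    exact ⟨a, ha, fun b hb => by_contra fun hba => Set.disjoint_left.1 (hdisj b a hba) hb ha⟩
  · intro h
    refine ⟨fun a b hab => Set.disjoint_left.2 fun e ha hb => hab ?_, subset_antisymm ?_ ?_⟩
    · exact (h.existsUnique_mem e (edgeSet_mono (h.le a) ha)).unique ha hb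
    · exact Set.iUnion_subset fun a => edgeSet_mono (h.le a)
    · exact fun e he => Set.mem_iUnion.2 (h.existsUnique_mem e he).exists

lemma IsHCFPartition.ncard_edgeSet_add_one (h : IsHCFPartition Γ) (a : Fin d) :
    (Γ a).edgeSet.ncard + 1 = 2 * d := by
  obtain ⟨⟨hdisj, hunion⟩, hcard, -⟩ := h
  have hd : 0 < d := a.pos
  have htop : (⊤ : SimpleGraph (Fin (2 * d))).edgeSet.ncard = d * (2 * d - 1) := by
    rw [ncard_edgeSet_top, Nat.card_fin, Nat.choose_two_right, mul_assoc,
      Nat.mul_div_cancel_left _ two_pos]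
  have hsum : d * (Γ a).edgeSet.ncard = d * (2 * d - 1) := by
    rw [← htop, ← hunion, Set.ncard_iUnion_of_finite (fun _ => Set.toFinite _) hdisj,
      finsum_eq_sum_of_fintype, Finset.sum_congr rfl fun b _ => hcard b a, Finset.sum_const,
      Finset.card_univ, Fintype.card_fin, smul_eq_mul]
  have := Nat.eq_of_mul_eq_mul_left hd hsum
  omega

lemma isHCFPartition_iff_isSpanningTreePartition :
    IsHCFPartition Γ ↔ IsSpanningTreePartition Γ ⊤ := by
  have htree (a : Fin d) :
      (Γ a).IsTree ↔ (Γ a).IsAcyclic ∧ (Γ a).edgeSet.ncard + 1 = 2 * d := by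
    rw [isTree_iff_isAcyclic_and_ncard, Nat.card_fin]
  constructor
  · exact fun h => ⟨isEdgePartition_iff_isPartitionOf.1 h.1,
      fun a => (htree a).2 ⟨h.2.2 a, h.ncard_edgeSet_add_one a⟩⟩
  · intro h
    have hcard (a : Fin d) := ((htree a).1 (h.isTree a)).2
    exact ⟨isEdgePartition_iff_isPartitionOf.2 h.toIsPartitionOf,
      fun a b => Nat.succ_injective ((hcard a).trans (hcard b).symm),
      fun a => (h.isTree a).isAcyclic⟩

end CompleteGraph

lemma deleteEdges_triangle_eq_iff {V : Type*} [LinearOrder V] {G H : SimpleGraph V} {x y z : V}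
    (hxy : x < y) (hyz : y < z) :
    G.deleteEdges {s(x, y), s(x, z), s(y, z)} = H.deleteEdges {s(x, y), s(x, z), s(y, z)} ↔
      ∀ i j, i < j → ¬((i = x ∧ j = y) ∨ (i = x ∧ j = z) ∨ (i = y ∧ j = z)) →
        (G.Adj i j ↔ H.Adj i j) := by
  have hmem {i j : V} (hij : i < j) : s(i, j) ∈ ({s(x, y), s(x, z), s(y, z)} : Set (Sym2 V)) ↔
      (i = x ∧ j = y) ∨ (i = x ∧ j = z) ∨ (i = y ∧ j = z) := by
    simp only [Set.mem_insert_iff, Set.mem_singleton_iff, Sym2.eq_iff]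
    grind
  constructor
  · intro h i j hij hnot
    simpa only [deleteEdges_adj, hmem hij, hnot, not_false_eq_true, and_true] using
      (congrArg (fun K : SimpleGraph V => K.Adj i j) h).to_iff
  · intro h
    have hlt {i j : V} (hij : i < j) : (G.deleteEdges {s(x, y), s(x, z), s(y, z)}).Adj i j ↔
        (H.deleteEdges {s(x, y), s(x, z), s(y, z)}).Adj i j := by
      simp only [deleteEdges_adj, hmem hij]
      exact and_congr_left (h i j hij)
    ext i j
    rcases lt_trichotomy i j with hij | rfl | hij
    · exact hlt hij
    · simp only [SimpleGraph.irrefl]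
    · rw [adj_comm, hlt hij, adj_comm]

/-- Given a homogeneous cycle-free edge d-partition Γ of K_{2d} and vertices
x < y < z, there is a unique homogeneous cycle-free edge d-partition Λ ≠ Γ
agreeing with Γ on all edges except on the triangle (x,y,z). -/
theorem exists_unique_involution (d : ℕ) (hd : 1 ≤ d)
    (Γ : Fin d → SimpleGraph (Fin (2*d))) (hΓ : IsHCFPartition Γ)
    (x y z : Fin (2*d)) (hxy : x < y) (hyz : y < z) :
    ∃! Λ : Fin d → SimpleGraph (Fin (2*d)),
      IsHCFPartition Λ ∧ Λ ≠ Γ ∧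
      ∀ i j : Fin (2*d), i < j →
        ¬((i = x ∧ j = y) ∨ (i = x ∧ j = z) ∨ (i = y ∧ j = z)) →
        ∀ a : Fin d, (Λ a).Adj i j ↔ (Γ a).Adj i j := by
  simpa only [isHCFPartition_iff_isSpanningTreePartition, deleteEdges_triangle_eq_iff hxy hyz,
    forall_comm (α := Fin d)] using exists_unique_involution_general
      (isHCFPartition_iff_isSpanningTreePartition.1 hΓ) hxy.ne (hxy.trans hyz).ne hyz.ne
end

section
/- Let A be an S^2-lower triangular d×d(2d-1) matrix over k and let Γ = (Γ_1,...,Γ_d) be a homogeneous cycle-free edge d-partition of the complete graph K_{2d}. Then either Γ = Γ^E or M_Γ(A) = 0. -/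
open SimpleGraph

/-!
If `M_Γ(A) ≠ 0`, lower triangularity puts every edge of `Γ_a` into some `Γ^E_b` with `b ≤ a`. By
homogeneity `Γ_a` has `2d - 1` edges, and `Γ^E_a` has no more: each of its edges joins some vertex
`v ≠ 2a - 1` to one of the vertices `2a - 1`, `2a`, and `v` determines which. So if `Γ_b = Γ^E_b`
for all `b < a`, the edges of `Γ_a`, being disjoint from those, lie in `Γ^E_a`, and counting gives
`Γ_a = Γ^E_a`.
-/

theorem eq_of_pairwise_disjoint_of_subset_biUnion_le {α β : Type*} [PartialOrder α]
    [WellFoundedLT α] {S T : α → Set β} (hS : Pairwise (Function.onFun Disjoint S))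
    (hT : ∀ a, (T a).Finite) (hST : ∀ a, S a ⊆ ⋃ b ≤ a, T b)
    (hcard : ∀ a, (T a).ncard ≤ (S a).ncard) : S = T := by
  funext a
  induction a using WellFoundedLT.induction with
  | ind a ih =>
    have hsub : S a ⊆ T a := by
      intro x hx
      obtain ⟨b, hba, hxb⟩ := Set.mem_iUnion₂.1 (hST a hx)
      rcases hba.lt_or_eq with hlt | rfl
      · rw [← ih b hlt] at hxb
        exact (Set.disjoint_left.1 (hS hlt.ne) hxb hx).elim
      · exact hxb
    exact Set.eq_of_subset_of_ncard_le hsub (hcard a) (hT a)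

section

variable {d : ℕ} {Γ : Fin d → SimpleGraph (Fin (2 * d))}

theorem exists_edgePair_of_mem_edgeSet {G : SimpleGraph (Fin (2 * d))} {e : Sym2 (Fin (2 * d))}
    (he : e ∈ G.edgeSet) : ∃ p : EdgePair d, s(p.val.1, p.val.2) = e := by
  induction e using Sym2.ind with
  | _ x y =>
    rcases (G.ne_of_adj he).lt_or_gt with hxy | hyx
    · exact ⟨⟨(x, y), hxy⟩, rfl⟩
    · exact ⟨⟨(y, x), hyx⟩, Sym2.eq_swap⟩

namespace IsEdgePartition

theorem pairwise_disjoint_edgeSet (hΓ : IsEdgePartition Γ) :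
    Pairwise (Function.onFun Disjoint fun a ↦ (Γ a).edgeSet) :=
  fun a b ↦ hΓ.1 a b

theorem sum_ncard_edgeSet (hΓ : IsEdgePartition Γ) :
    ∑ a, (Γ a).edgeSet.ncard = d * (2 * d - 1) := by
  calc ∑ a, (Γ a).edgeSet.ncard
      = (⋃ a, (Γ a).edgeSet).ncard := by
        rw [Set.ncard_iUnion_of_finite (fun a ↦ (Γ a).edgeSet.toFinite)
          hΓ.pairwise_disjoint_edgeSet, finsum_eq_sum_of_fintype]
    _ = (⊤ : SimpleGraph (Fin (2 * d))).edgeFinset.card := by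
        rw [hΓ.2, ← coe_edgeFinset, Set.ncard_coe_finset]
    _ = (2 * d).choose 2 := by rw [card_edgeFinset_top_eq_card_choose_two, Fintype.card_fin]
    _ = d * (2 * d - 1) := by
        rw [Nat.choose_two_right, mul_assoc, Nat.mul_div_cancel_left _ two_pos]

theorem ncard_edgeSet_of_homogeneous (hΓ : IsEdgePartition Γ)
    (hhom : ∀ a b, (Γ a).edgeSet.ncard = (Γ b).edgeSet.ncard) (a : Fin d) :
    (Γ a).edgeSet.ncard = 2 * d - 1 := by
  have hsum : d * (Γ a).edgeSet.ncard = d * (2 * d - 1) := by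
    simpa [fun b ↦ hhom b a] using hΓ.sum_ncard_edgeSet
  exact Nat.eq_of_mul_eq_mul_left a.pos hsum

end IsEdgePartition

theorem mem_edgeSet_GammaE {a : Fin d} {e : Sym2 (Fin (2 * d))} :
    e ∈ (GammaE d a).edgeSet ↔ ∃ p : EdgePair d, ind p = a ∧ s(p.val.1, p.val.2) = e := by
  rw [GammaE, edgeSet_fromEdgeSet]
  constructor
  · rintro ⟨⟨i, j, hij, hind, rfl⟩, -⟩
    exact ⟨⟨(i, j), hij⟩, hind, rfl⟩
  · rintro ⟨⟨⟨i, j⟩, hij⟩, hind, rfl⟩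
    exact ⟨⟨i, j, hij, hind, rfl⟩, hij.ne⟩

/-- `Γ^E_a` is a double star: its central edge joins `2a` and `2a + 1` (0-based), and every other
vertex is a leaf. `doubleStarHub a v` is the centre adjacent to `v`. -/
def doubleStarHub (a : Fin d) (v : Fin (2 * d)) : Fin (2 * d) :=
  if (v : ℕ) ≤ 2 * a + 1 ↔ (v : ℕ) % 2 = 1 then ⟨2 * a, by omega⟩ else ⟨2 * a + 1, by omega⟩

theorem eq_doubleStarHub_of_ind_eq {a : Fin d} {p : EdgePair d} (hp : ind p = a) :
    ((p.val.1 : ℕ) ≠ 2 * a ∧ p.val.2 = doubleStarHub a p.val.1) ∨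
      ((p.val.2 : ℕ) ≠ 2 * a ∧ p.val.1 = doubleStarHub a p.val.2) := by
  obtain ⟨⟨i, j⟩, hij⟩ := p
  simp only [ind, indF, doubleStarHub, Fin.ext_iff, Fin.lt_def] at hp hij ⊢
  split_ifs at hp ⊢ <;> simp only at hp ⊢ <;> omega

theorem edgeSet_GammaE_subset_image (a : Fin d) :
    (GammaE d a).edgeSet ⊆
      (fun v ↦ s(v, doubleStarHub a v)) '' {(⟨2 * a, by omega⟩ : Fin (2 * d))}ᶜ := by
  intro e he
  obtain ⟨p, hp, rfl⟩ := mem_edgeSet_GammaE.1 he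
  rcases eq_doubleStarHub_of_ind_eq hp with ⟨hne, hhub⟩ | ⟨hne, hhub⟩
  · exact ⟨p.val.1, fun h ↦ hne (Fin.ext_iff.1 h), congrArg (s(p.val.1, ·)) hhub.symm⟩
  · exact ⟨p.val.2, fun h ↦ hne (Fin.ext_iff.1 h),
      (congrArg (s(p.val.2, ·)) hhub.symm).trans Sym2.eq_swap⟩

theorem ncard_edgeSet_GammaE_le (a : Fin d) : (GammaE d a).edgeSet.ncard ≤ 2 * d - 1 :=
  calc (GammaE d a).edgeSet.ncard
      ≤ ({(⟨2 * a, by omega⟩ : Fin (2 * d))}ᶜ : Set (Fin (2 * d))).ncard :=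
        (Set.ncard_le_ncard (edgeSet_GammaE_subset_image a)).trans Set.ncard_image_le
    _ = 2 * d - 1 := by rw [Set.ncard_compl, Set.ncard_singleton, Nat.card_fin]

theorem IsEdgePartition.eq_GammaE_of_ind_le (hΓ : IsEdgePartition Γ)
    (hhom : ∀ a b, (Γ a).edgeSet.ncard = (Γ b).edgeSet.ncard)
    (hind : ∀ a (p : EdgePair d), (Γ a).Adj p.val.1 p.val.2 → ind p ≤ a) : Γ = GammaE d := by
  have hsub (a : Fin d) : (Γ a).edgeSet ⊆ ⋃ b ≤ a, (GammaE d b).edgeSet := by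
    intro e he
    obtain ⟨p, rfl⟩ := exists_edgePair_of_mem_edgeSet he
    exact Set.mem_biUnion (hind a p he) (mem_edgeSet_GammaE.2 ⟨p, rfl, rfl⟩)
  have hcard (a : Fin d) : (GammaE d a).edgeSet.ncard ≤ (Γ a).edgeSet.ncard :=
    (ncard_edgeSet_GammaE_le a).trans_eq (hΓ.ncard_edgeSet_of_homogeneous hhom a).symm
  have hedge := eq_of_pairwise_disjoint_of_subset_biUnion_le hΓ.pairwise_disjoint_edgeSet
    (fun a ↦ (GammaE d a).edgeSet.toFinite) hsub hcard
  exact funext fun a ↦ edgeSet_injective (congrFun hedge a)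

variable {k : Type*} [Field k] {A : Fin d → EdgePair d → k}

theorem entry_ne_zero_of_MGamma_ne_zero (hM : MGamma Γ A ≠ 0) {a : Fin d} {p : EdgePair d}
    (hp : (Γ a).Adj p.val.1 p.val.2) : A a p ≠ 0 := by
  classical
  have hfactor := Finset.prod_ne_zero_iff.1
    (Finset.prod_ne_zero_iff.1 hM a (Finset.mem_univ a)) p (Finset.mem_univ p)
  rwa [if_pos hp] at hfactor

theorem S2LowerTriangular.ind_le_of_ne_zero (hA : S2LowerTriangular A) {a : Fin d}
    {p : EdgePair d} (hp : A a p ≠ 0) : ind p ≤ a :=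
  not_lt.1 fun hlt ↦ hp (hA a p hlt)

theorem lower_monomial_eq_zero_of_ne_GammaE_general (hA : S2LowerTriangular A)
    (hΓ : IsEdgePartition Γ) (hhom : ∀ a b, (Γ a).edgeSet.ncard = (Γ b).edgeSet.ncard) :
    Γ = GammaE d ∨ MGamma Γ A = 0 :=
  or_iff_not_imp_right.2 fun hM ↦ hΓ.eq_GammaE_of_ind_le hhom fun _ _ hp ↦
    hA.ind_le_of_ne_zero (entry_ne_zero_of_MGamma_ne_zero hM hp)

end

/-- For an S²-lower triangular matrix A and a homogeneous cycle-free edge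
d-partition Γ of K_{2d}, either Γ = Γ^E or M_Γ(A) = 0. -/
theorem lower_monomial_eq_zero_of_ne_GammaE (k : Type*) [Field k] (d : ℕ) (hd : 1 ≤ d)
    (A : Fin d → EdgePair d → k) (hA : S2LowerTriangular A)
    (Γ : Fin d → SimpleGraph (Fin (2*d))) (hΓ : IsHCFPartition Γ) :
    Γ = (fun a : Fin d => GammaE d a) ∨ MGamma Γ A = 0 :=
  lower_monomial_eq_zero_of_ne_GammaE_general hA hΓ.1 hΓ.2.1
end

section
/- Let ε be any function from the (finite) set P^{h,cf}_d(K_{2d}) of homogeneous cycle-free edge d-partitions of K_{2d} to k, and define D_ε(A) = Σ_{Γ ∈ P^{h,cf}_d(K_{2d})} ε(Γ)·M_Γ(A) for d×d(2d-1) matrices A. Then for every S^2-lower triangular d×d(2d-1) matrix A one has D_ε(A) = D_ε(I^{S^2}_d) · ∏_{1 ≤ i < j ≤ 2d} A^{ind(i,j)}_{i,j}; that is, D_ε(A) equals D_ε(I^{S^2}_d) times the product of the S^2-diagonal of A. -/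
open SimpleGraph

-- `D_ε(A) = Σ_{Γ ∈ P^{h,cf}_d(K_{2d})} ε(Γ)·M_Γ(A)`.
open scoped Classical in
noncomputable def Deps {d : ℕ} {k : Type*} [Field k]
    (ε : (Fin d → SimpleGraph (Fin (2*d))) → k) (A : Fin d → EdgePair d → k) : k :=
  ∑ Γ ∈ Finset.univ.filter (fun Γ : Fin d → SimpleGraph (Fin (2*d)) => IsHCFPartition Γ),
    ε Γ * MGamma Γ A

/-!
An edge partition `Γ` of `K_{2d}` is a colouring `c` of the edges by `Fin d`, and then
`M_Γ(A) = ∏ e, A (c e) e`. For lower triangular `A` this vanishes unless `ind ≤ c` everywhere. All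
fibres of `ind` have `2d - 1` elements, and so do all fibres of `c` when `Γ` is homogeneous; two
functions whose fibres have equal sizes, one of them dominating the other, coincide. Hence the
only homogeneous partition that contributes is the one with `c = ind`, for which `M_Γ(A)` is the
product of the diagonal and `M_Γ(I) = 1`.
-/

open Finset

section Fibers

variable {ι κ : Type*} [Fintype ι] [DecidableEq κ]

theorem card_filter_comp_eq_of_card_fiber_eq {f g : ι → κ}
    (h : ∀ a, #{i | f i = a} = #{i | g i = a}) (p : κ → Prop) [DecidablePred p] :
    #{i | p (f i)} = #{i | p (g i)} := by
  have hmap : univ.val.map f = univ.val.map g := by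
    ext a
    simpa only [Multiset.count_map, eq_comm (a := a), card_def, filter_val] using h a
  simpa only [Multiset.countP_map, card_def, filter_val] using congrArg (Multiset.countP p) hmap

theorem eq_of_le_of_card_fiber_eq [PartialOrder κ] {f g : ι → κ} (hle : f ≤ g)
    (h : ∀ a, #{i | f i = a} = #{i | g i = a}) : f = g := by
  classical
  refine le_antisymm hle fun i => ?_
  -- The preimages of the ray above `g i` are nested and equinumerous, hence equal.
  have hsub : ({j | g i ≤ f j} : Finset ι) ⊆ ({j | g i ≤ g j} : Finset ι) :=
    monotone_filter_right _ fun j _ hj => le_trans hj (hle j)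
  have heq := eq_of_subset_of_card_le hsub
    (card_filter_comp_eq_of_card_fiber_eq h (g i ≤ ·)).ge
  have hi : i ∈ ({j | g i ≤ f j} : Finset ι) := heq ▸ mem_filter.2 ⟨mem_univ i, le_rfl⟩
  exact (mem_filter.1 hi).2

theorem card_mul_card_fiber [Fintype κ] {f : ι → κ}
    (h : ∀ a b, #{i | f i = a} = #{i | f i = b}) (a : κ) :
    Fintype.card κ * #{i | f i = a} = Fintype.card ι := by
  calc Fintype.card κ * #{i | f i = a} = ∑ b, #{i | f i = b} := by
        rw [sum_congr rfl fun b _ => h b a, sum_const, card_univ, smul_eq_mul]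
    _ = Fintype.card ι := (card_eq_sum_card_fiberwise fun _ _ => mem_univ _).symm

end Fibers

section OrderedEdges

variable {V : Type*}

theorem injective_sym2Mk_of_lt [Preorder V] :
    Function.Injective fun e : {p : V × V // p.1 < p.2} => s(e.1.1, e.1.2) := by
  rintro ⟨⟨x, y⟩, hxy⟩ ⟨⟨x', y'⟩, hxy'⟩ h
  rcases Sym2.eq_iff.1 h with ⟨rfl, rfl⟩ | ⟨rfl, rfl⟩
  · rfl
  · exact absurd hxy hxy'.asymm

theorem ncard_edgeSet_eq_card_filter_lt [LinearOrder V] [Fintype V] (G : SimpleGraph V)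
    [DecidableRel G.Adj] :
    G.edgeSet.ncard = #{e : {p : V × V // p.1 < p.2} | G.Adj e.1.1 e.1.2} := by
  rw [← Set.ncard_coe_finset, ← Set.ncard_image_of_injective _ injective_sym2Mk_of_lt]
  congr 1
  ext z
  induction z with | _ x y
  refine ⟨fun h => ?_, ?_⟩
  · rcases lt_or_gt_of_ne (G.ne_of_adj h) with hlt | hgt
    · exact ⟨⟨(x, y), hlt⟩, by simpa using h, rfl⟩
    · exact ⟨⟨(y, x), hgt⟩, by simpa using h.symm, Sym2.eq_swap⟩
  · rintro ⟨e, he, hez⟩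
    rw [← hez]
    exact (mem_filter.1 he).2

end OrderedEdges

section Index

variable {d : ℕ}

theorem card_edgePair (d : ℕ) : Fintype.card (EdgePair d) = d * (2 * d - 1) := by
  have h := ncard_edgeSet_eq_card_filter_lt (⊤ : SimpleGraph (Fin (2 * d)))
  rw [filter_true_of_mem fun e _ => e.2.ne, card_univ, ← coe_edgeFinset, Set.ncard_coe_finset,
    card_edgeFinset_top_eq_card_choose_two, Fintype.card_fin, Nat.choose_two_right,
    mul_assoc, Nat.mul_div_cancel_left _ two_pos] at h
  exact h.symm

/-- The endpoint of `e` that does not enter the formula for `ind e`. The edges with `ind e = a` form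
a double star centred at `2a` and `2a + 1` (0-based); `freeEnd` is the leaf of such an edge, and
`2a` for the edge joining the two centres. -/
def freeEnd (e : EdgePair d) : Fin (2 * d) :=
  if ((e.1.1 : ℕ) + e.1.2) % 2 = 0 then e.1.2 else e.1.1

theorem freeEnd_ne (e : EdgePair d) : (freeEnd e : ℕ) ≠ 2 * ind e + 1 := by
  obtain ⟨⟨i, j⟩, hij⟩ := e
  simp only [freeEnd, ind, indF, Fin.lt_def] at hij ⊢
  split_ifs <;> simp only <;> omega

theorem freeEnd_injOn (a : Fin d) : Set.InjOn freeEnd {e : EdgePair d | ind e = a} := by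
  rintro ⟨⟨i, j⟩, hij⟩ he ⟨⟨i', j'⟩, hij'⟩ he' h
  simp only [Set.mem_ofPred_eq, freeEnd, ind, indF, Fin.lt_def] at hij hij' he he' h
  simp only [Subtype.mk.injEq, Prod.mk.injEq]
  split_ifs at he he' h <;> simp only [Fin.ext_iff] at he he' h ⊢ <;> omega

theorem card_ind_fiber_le (a : Fin d) : #{e : EdgePair d | ind e = a} ≤ 2 * d - 1 := by
  calc #{e : EdgePair d | ind e = a}
      ≤ #(univ.erase (⟨2 * a + 1, by omega⟩ : Fin (2 * d))) := by
        refine card_le_card_of_injOn freeEnd (fun e he => ?_) ?_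
        · obtain rfl : ind e = a := (mem_filter.1 he).2
          exact mem_erase.2 ⟨fun h => freeEnd_ne e (congrArg Fin.val h), mem_univ _⟩
        · simpa only [coe_filter_univ] using freeEnd_injOn a
    _ = 2 * d - 1 := by rw [card_erase_of_mem (mem_univ _), card_univ, Fintype.card_fin]

theorem card_ind_fiber (a : Fin d) : #{e : EdgePair d | ind e = a} = 2 * d - 1 := by
  have hsum : ∑ b : Fin d, #{e : EdgePair d | ind e = b} = ∑ _b : Fin d, (2 * d - 1) := by
    rw [← card_eq_sum_card_fiberwise fun _ _ => mem_univ _, card_univ, card_edgePair]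
    simp
  exact (sum_eq_sum_iff_of_le fun b _ => card_ind_fiber_le b).1 hsum a (mem_univ a)

end Index

/-- Homogeneity of a family of graphs, as required of edge partitions: all members have the same
number of edges. Infinite edge sets count as having `0` edges. -/
def IsHomogeneous {ι V : Type*} (Γ : ι → SimpleGraph V) : Prop :=
  ∀ a b, (Γ a).edgeSet.ncard = (Γ b).edgeSet.ncard

namespace IsEdgePartition

variable {d : ℕ} {Γ : Fin d → SimpleGraph (Fin (2 * d))}

theorem existsUnique_adj (h : IsEdgePartition Γ) {x y : Fin (2 * d)} (hxy : x ≠ y) :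
    ∃! a, (Γ a).Adj x y := by
  have hmem : s(x, y) ∈ ⋃ a, (Γ a).edgeSet := h.2 ▸ hxy
  obtain ⟨a, ha⟩ := Set.mem_iUnion.1 hmem
  exact ⟨a, ha, fun b hb => by_contra fun hba => Set.disjoint_left.1 (h.1 b a hba) hb ha⟩

/-- The colouring of the edges of `K_{2d}` that encodes an edge partition `Γ`: the edge `e` lies in
`Γ (h.color e)` and in no other part. -/
noncomputable def color (h : IsEdgePartition Γ) (e : EdgePair d) : Fin d :=
  (h.existsUnique_adj e.2.ne).choose

theorem adj_iff_color_eq (h : IsEdgePartition Γ) (a : Fin d) (e : EdgePair d) :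
    (Γ a).Adj e.1.1 e.1.2 ↔ h.color e = a := by
  have hex := h.existsUnique_adj e.2.ne
  exact ⟨fun ha => (hex.choose_spec.2 a ha).symm, fun ha => ha ▸ hex.choose_spec.1⟩

theorem card_color_fiber (h : IsEdgePartition Γ) (hhom : IsHomogeneous Γ) (a : Fin d) :
    #{e | h.color e = a} = 2 * d - 1 := by
  classical
  have hfib (b : Fin d) : (Γ b).edgeSet.ncard = #{e | h.color e = b} := by
    simp only [ncard_edgeSet_eq_card_filter_lt, h.adj_iff_color_eq]
  have htotal : d * #{e | h.color e = a} = d * (2 * d - 1) := by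
    have hunif (b c : Fin d) : #{e | h.color e = b} = #{e | h.color e = c} := by
      rw [← hfib, ← hfib, hhom b c]
    rw [← card_edgePair, ← card_mul_card_fiber hunif a, Fintype.card_fin]
  exact Nat.eq_of_mul_eq_mul_left a.pos htotal

theorem exists_color_lt_ind (h : IsEdgePartition Γ) (hhom : IsHomogeneous Γ)
    (hne : h.color ≠ ind) : ∃ e, h.color e < ind e := by
  by_contra! hle
  exact hne (eq_of_le_of_card_fiber_eq hle fun a => by
    rw [card_ind_fiber, h.card_color_fiber hhom]).symm

variable {k : Type*} [Field k]

theorem MGamma_eq_prod (h : IsEdgePartition Γ) (A : Fin d → EdgePair d → k) :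
    MGamma Γ A = ∏ e, A (h.color e) e := by
  simp only [MGamma, h.adj_iff_color_eq]
  rw [prod_comm]
  exact prod_congr rfl fun e _ => by simp only [prod_ite_eq, mem_univ, if_true]

theorem MGamma_IS2 (h : IsEdgePartition Γ) :
    MGamma Γ (IS2 d k) = if h.color = ind then 1 else 0 := by
  simp only [h.MGamma_eq_prod, IS2, prod_ite_zero, prod_const_one, mem_univ, true_implies,
    funext_iff]

theorem MGamma_eq_MGamma_IS2_mul (h : IsEdgePartition Γ) (hhom : IsHomogeneous Γ)
    {A : Fin d → EdgePair d → k} (hA : S2LowerTriangular A) :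
    MGamma Γ A = MGamma Γ (IS2 d k) * ∏ e, A (ind e) e := by
  rw [h.MGamma_IS2, h.MGamma_eq_prod]
  split_ifs with hc
  · rw [hc, one_mul]
  · obtain ⟨e, he⟩ := h.exists_color_lt_ind hhom hc
    rw [zero_mul]
    exact prod_eq_zero (mem_univ e) (hA _ _ he)

end IsEdgePartition

theorem Deps_lower_triangular_general {k : Type*} [Field k] {d : ℕ}
    (S : Finset (Fin d → SimpleGraph (Fin (2 * d))))
    (hS : ∀ Γ ∈ S, IsEdgePartition Γ ∧ IsHomogeneous Γ)
    (ε : (Fin d → SimpleGraph (Fin (2 * d))) → k)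
    {A : Fin d → EdgePair d → k} (hA : S2LowerTriangular A) :
    ∑ Γ ∈ S, ε Γ * MGamma Γ A =
      (∑ Γ ∈ S, ε Γ * MGamma Γ (IS2 d k)) * ∏ e : EdgePair d, A (ind e) e := by
  rw [sum_mul]
  refine sum_congr rfl fun Γ hΓ => ?_
  rw [(hS Γ hΓ).1.MGamma_eq_MGamma_IS2_mul (hS Γ hΓ).2 hA, mul_assoc]

/-- For any ε : P^{h,cf}_d(K_{2d}) → k and every S²-lower triangular A,
D_ε(A) = D_ε(I^{S²}_d) · (product of the S²-diagonal of A). -/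
theorem Deps_lower_triangular (k : Type*) [Field k] (d : ℕ) (hd : 1 ≤ d)
    (ε : (Fin d → SimpleGraph (Fin (2*d))) → k)
    (A : Fin d → EdgePair d → k) (hA : S2LowerTriangular A) :
    Deps ε A = Deps ε (IS2 d k) * ∏ e : EdgePair d, A (ind e) e := by
  classical
  exact Deps_lower_triangular_general _ (fun Γ hΓ => (mem_filter.1 hΓ).2.imp_right And.left) ε hA
end

section
/- The matrix I^{S^2}_d is a two-sided multiplicative unit for the Leg Identifying Multiplication: for every d×d(2d-1) matrix A over k, I^{S^2}_d ⊙ A = A and A ⊙ I^{S^2}_d = A. -/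
def mkEdge {d : ℕ} (i j : ℕ) (hi : i < 2*d) (hj : j < 2*d) (hij : i < j) : EdgePair d :=
  ⟨(⟨i, hi⟩, ⟨j, hj⟩), Fin.mk_lt_mk.mpr hij⟩

/-- The central edge `(2a-1, 2a)` of the twin star `TS_d(2a-1, 2a)` (0-based `a`). -/
def centerEdge {d : ℕ} (a : Fin d) : EdgePair d :=
  mkEdge (2*a) (2*a+1) (by have := a.isLt; omega) (by have := a.isLt; omega) (by omega)

/-- The left leg of the twin star `TS_d(2a-1, 2a)` with leg number `n + 1`
(both `a` and `n` 0-based): left legs are enumerated in increasing order of their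
endpoint different from `2a - 1`. -/
def leftLeg {d : ℕ} (a : Fin d) (n : Fin (d-1)) : EdgePair d :=
  if h : (n : ℕ) < (a : ℕ) then
    mkEdge (2*n+1) (2*a) (by have := n.isLt; omega) (by have := a.isLt; omega) (by omega)
  else
    mkEdge (2*a) (2*n+2) (by have := a.isLt; omega) (by have := n.isLt; omega) (by omega)

/-- The right leg of the twin star `TS_d(2a-1, 2a)` with leg number `n + 1`
(both `a` and `n` 0-based): right legs are enumerated in increasing order of their
endpoint different from `2a`. -/
def rightLeg {d : ℕ} (a : Fin d) (n : Fin (d-1)) : EdgePair d :=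
  if h : (n : ℕ) < (a : ℕ) then
    mkEdge (2*n) (2*a+1) (by have := n.isLt; omega) (by have := a.isLt; omega) (by omega)
  else
    mkEdge (2*a+1) (2*n+3) (by have := a.isLt; omega) (by have := n.isLt; omega) (by omega)

/-- The central leg submatrix `A^C`: its `a`-th column is the column of `A` indexed by
`(2a-1, 2a)`. -/
def legC {d : ℕ} {k : Type*} [Field k] (A : Fin d → EdgePair d → k) :
    Matrix (Fin d) (Fin d) k :=
  Matrix.of fun r a => A r (centerEdge a)

/-- The left leg submatrix `A^L_n`: its `a`-th column is the column of `A` indexed by the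
left leg of `TS_d(2a-1, 2a)` with leg number `n`. -/
def legL {d : ℕ} {k : Type*} [Field k] (A : Fin d → EdgePair d → k) (n : Fin (d-1)) :
    Matrix (Fin d) (Fin d) k :=
  Matrix.of fun r a => A r (leftLeg a n)

/-- The right leg submatrix `A^R_n`: its `a`-th column is the column of `A` indexed by the
right leg of `TS_d(2a-1, 2a)` with leg number `n`. -/
def legR {d : ℕ} {k : Type*} [Field k] (A : Fin d → EdgePair d → k) (n : Fin (d-1)) :
    Matrix (Fin d) (Fin d) k :=
  Matrix.of fun r a => A r (rightLeg a n)

/-- The Leg Identifying Multiplication `A ⊙ B`: each column, indexed by an edge `e` of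
`K_{2d}`, is classified as the central edge, a left leg, or a right leg (with its leg
number `n`) of the twin star it belongs to, say `TS_d(2a-1,2a)`; the corresponding column
of `A ⊙ B` is the `a`-th column of the ordinary matrix product of the corresponding leg
submatrices of `A` and `B`. -/
def LIM {d : ℕ} {k : Type*} [Field k] (A B : Fin d → EdgePair d → k) :
    Fin d → EdgePair d → k := fun r e =>
  have hij : (e.val.1 : ℕ) < (e.val.2 : ℕ) := e.prop
  have hi : (e.val.1 : ℕ) < 2*d := e.val.1.isLt
  have hj : (e.val.2 : ℕ) < 2*d := e.val.2.isLt
  if h1 : (e.val.1 : ℕ) % 2 = 0 then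
    if h2 : (e.val.2 : ℕ) % 2 = 1 then
      if h3 : (e.val.2 : ℕ) = (e.val.1 : ℕ) + 1 then
        -- the central edge (2a-1, 2a) with (0-based) a = i/2
        (legC A * legC B) r ⟨(e.val.1 : ℕ) / 2, by omega⟩
      else
        -- a right leg (2a'-1, 2a) : star (0-based) a = j/2, leg number (0-based) i/2
        (legR A ⟨(e.val.1 : ℕ) / 2, by omega⟩ * legR B ⟨(e.val.1 : ℕ) / 2, by omega⟩)
          r ⟨(e.val.2 : ℕ) / 2, by omega⟩
    else
      -- a left leg (2a-1, 2c-1) : star (0-based) a = i/2, leg number (0-based) j/2 - 1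
      (legL A ⟨(e.val.2 : ℕ) / 2 - 1, by omega⟩ * legL B ⟨(e.val.2 : ℕ) / 2 - 1, by omega⟩)
        r ⟨(e.val.1 : ℕ) / 2, by omega⟩
  else
    if h2 : (e.val.2 : ℕ) % 2 = 0 then
      -- a left leg (2a', 2a-1) : star (0-based) a = j/2, leg number (0-based) i/2
      (legL A ⟨(e.val.1 : ℕ) / 2, by omega⟩ * legL B ⟨(e.val.1 : ℕ) / 2, by omega⟩)
        r ⟨(e.val.2 : ℕ) / 2, by omega⟩
    else
      -- a right leg (2a, 2c) : star (0-based) a = i/2, leg number (0-based) j/2 - 1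
      (legR A ⟨(e.val.2 : ℕ) / 2 - 1, by omega⟩ * legR B ⟨(e.val.2 : ℕ) / 2 - 1, by omega⟩)
        r ⟨(e.val.1 : ℕ) / 2, by omega⟩

/-!
Every edge of `K_{2d}` is the centre, a left leg or a right leg of a twin star, so a
`d × d(2d-1)` matrix is determined by its leg submatrices `A^C`, `A^L_n` and `A^R_n`. In these
coordinates the Leg Identifying Multiplication is componentwise multiplication of `d × d`
matrices. Since `ind` is constantly `a` on the edges of `TS_d(2a-1, 2a)`, all leg submatrices of
`I^{S^2}_d` are identity matrices.
-/

section Legs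

variable {d : ℕ}

theorem leftLeg_of_lt {a : Fin d} {n : Fin (d - 1)} (h : (n : ℕ) < a) :
    leftLeg a n = mkEdge (2 * n + 1) (2 * a) (by omega) (by omega) (by omega) :=
  dif_pos h

theorem leftLeg_of_le {a : Fin d} {n : Fin (d - 1)} (h : (a : ℕ) ≤ n) :
    leftLeg a n = mkEdge (2 * a) (2 * n + 2) (by omega) (by omega) (by omega) :=
  dif_neg h.not_gt

theorem rightLeg_of_lt {a : Fin d} {n : Fin (d - 1)} (h : (n : ℕ) < a) :
    rightLeg a n = mkEdge (2 * n) (2 * a + 1) (by omega) (by omega) (by omega) :=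
  dif_pos h

theorem rightLeg_of_le {a : Fin d} {n : Fin (d - 1)} (h : (a : ℕ) ≤ n) :
    rightLeg a n = mkEdge (2 * a + 1) (2 * n + 3) (by omega) (by omega) (by omega) :=
  dif_neg h.not_gt

theorem val_ind_mkEdge {i j : ℕ} (hi : i < 2 * d) (hj : j < 2 * d) (hij : i < j) :
    (ind (mkEdge i j hi hj hij) : ℕ) = if (i + j) % 2 = 0 then i / 2 else j / 2 :=
  apply_ite Fin.val _ _ _

theorem ind_centerEdge (a : Fin d) : ind (centerEdge a) = a := by
  ext
  rw [centerEdge, val_ind_mkEdge, if_neg (by omega)]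
  omega

theorem ind_leftLeg (a : Fin d) (n : Fin (d - 1)) : ind (leftLeg a n) = a := by
  ext
  obtain h | h := lt_or_ge (n : ℕ) a
  · rw [leftLeg_of_lt h, val_ind_mkEdge, if_neg (by omega)]
    omega
  · rw [leftLeg_of_le h, val_ind_mkEdge, if_pos (by omega)]
    omega

theorem ind_rightLeg (a : Fin d) (n : Fin (d - 1)) : ind (rightLeg a n) = a := by
  ext
  obtain h | h := lt_or_ge (n : ℕ) a
  · rw [rightLeg_of_lt h, val_ind_mkEdge, if_neg (by omega)]
    omega
  · rw [rightLeg_of_le h, val_ind_mkEdge, if_pos (by omega)]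
    omega

@[elab_as_elim]
theorem EdgePair.leg_cases {P : EdgePair d → Prop} (e : EdgePair d)
    (center : ∀ a, P (centerEdge a)) (left : ∀ a n, P (leftLeg a n))
    (right : ∀ a n, P (rightLeg a n)) : P e := by
  obtain ⟨⟨⟨i, hi⟩, ⟨j, hj⟩⟩, hij⟩ := e
  rw [Fin.mk_lt_mk] at hij
  obtain ⟨p, rfl | rfl⟩ := i.even_or_odd' <;> obtain ⟨q, rfl | rfl⟩ := j.even_or_odd'
  · obtain ⟨n, rfl⟩ : ∃ n, q = n + 1 := Nat.exists_eq_add_one.mpr (by omega)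
    have h := left ⟨p, by omega⟩ ⟨n, by omega⟩
    rwa [leftLeg_of_le (by dsimp only; omega)] at h
  · obtain rfl | hpq : p = q ∨ p < q := by omega
    · exact center ⟨p, by omega⟩
    · have h := right ⟨q, by omega⟩ ⟨p, by omega⟩
      rwa [rightLeg_of_lt hpq] at h
  · have h := left ⟨q, by omega⟩ ⟨p, by omega⟩
    rwa [leftLeg_of_lt (by dsimp only; omega)] at h
  · obtain ⟨n, rfl⟩ : ∃ n, q = n + 1 := Nat.exists_eq_add_one.mpr (by omega)
    have h := right ⟨p, by omega⟩ ⟨n, by omega⟩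
    rwa [rightLeg_of_le (by dsimp only; omega)] at h

end Legs

section LegMatrices

variable {d : ℕ} {k : Type*} [Field k]

theorem eq_of_legs_eq {A B : Fin d → EdgePair d → k} (hC : legC A = legC B)
    (hL : ∀ n, legL A n = legL B n) (hR : ∀ n, legR A n = legR B n) : A = B := by
  ext r e
  cases e using EdgePair.leg_cases with
  | center a => exact congr_fun₂ hC r a
  | left a n => exact congr_fun₂ (hL n) r a
  | right a n => exact congr_fun₂ (hR n) r a

theorem legC_LIM (A B : Fin d → EdgePair d → k) : legC (LIM A B) = legC A * legC B := by
  ext r a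
  simp [legC, LIM, centerEdge, mkEdge]

theorem legL_LIM (A B : Fin d → EdgePair d → k) (n : Fin (d - 1)) :
    legL (LIM A B) n = legL A n * legL B n := by
  ext r a
  rw [legL, Matrix.of_apply]
  obtain h | h := lt_or_ge (n : ℕ) a
  · rw [leftLeg_of_lt h]
    simp [LIM, mkEdge, Nat.mul_add_div]
  · rw [leftLeg_of_le h]
    simp [LIM, mkEdge]

theorem legR_LIM (A B : Fin d → EdgePair d → k) (n : Fin (d - 1)) :
    legR (LIM A B) n = legR A n * legR B n := by
  ext r a
  rw [legR, Matrix.of_apply]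
  obtain h | h := lt_or_ge (n : ℕ) a
  · rw [rightLeg_of_lt h]
    simp [LIM, mkEdge, Nat.mul_add_div, h.ne']
  · rw [rightLeg_of_le h]
    simp [LIM, mkEdge, Nat.mul_add_div]

theorem legC_IS2 : legC (IS2 d k) = 1 := by
  ext r a
  rw [legC, Matrix.of_apply, IS2, ind_centerEdge, Matrix.one_apply]

theorem legL_IS2 (n : Fin (d - 1)) : legL (IS2 d k) n = 1 := by
  ext r a
  rw [legL, Matrix.of_apply, IS2, ind_leftLeg, Matrix.one_apply]

theorem legR_IS2 (n : Fin (d - 1)) : legR (IS2 d k) n = 1 := by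
  ext r a
  rw [legR, Matrix.of_apply, IS2, ind_rightLeg, Matrix.one_apply]

end LegMatrices

/-- The matrix form of E^(2)_d is a two-sided unit for the Leg Identifying
Multiplication. -/
theorem IS2_LIM_unit (k : Type*) [Field k] (d : ℕ) (hd : 1 ≤ d)
    (A : Fin d → EdgePair d → k) :
    LIM (IS2 d k) A = A ∧ LIM A (IS2 d k) = A := by
  constructor
  · apply eq_of_legs_eq
    · rw [legC_LIM, legC_IS2, one_mul]
    · intro n
      rw [legL_LIM, legL_IS2, one_mul]
    · intro n
      rw [legR_LIM, legR_IS2, one_mul]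
  · apply eq_of_legs_eq
    · rw [legC_LIM, legC_IS2, mul_one]
    · intro n
      rw [legL_LIM, legL_IS2, mul_one]
    · intro n
      rw [legR_LIM, legR_IS2, mul_one]
end

section
/- Let A be a d×d(2d-1) matrix over k such that every leg submatrix of A (that is, A^C and A^L_n, A^R_n for 1 ≤ n ≤ d-1) has all of its leading principal minors nonzero (the determinant of the top-left r×r submatrix is nonzero for every 1 ≤ r ≤ d). Then there exist an S^2-lower triangular matrix L, which may be chosen so that every entry of its S^2-diagonal equals 1, and an S^2-upper triangular matrix U such that A = L⊙U. -/
/-- All leading principal minors of a d×d matrix are nonzero: for every 1 ≤ r ≤ d,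
the determinant of the top-left r×r submatrix is nonzero. -/
def LeadingMinorsNonzero {d : ℕ} {k : Type*} [Field k] (M : Matrix (Fin d) (Fin d) k) :
    Prop :=
  ∀ (r : ℕ), 1 ≤ r → ∀ (h : r ≤ d), (M.submatrix (Fin.castLE h) (Fin.castLE h)).det ≠ 0

/-!
An edge `e` of `K_{2d}` is determined by the number `ind e` of its twin star and its position there,
so a `d × d(2d-1)` matrix is the same thing as a family of `2d - 1` leg submatrices. Under this
correspondence `⊙` is the matrix product in each leg, and the `S²`-diagonal is the ordinary diagonal
of each leg. It remains to factor every leg separately. A matrix whose top-left block `A = L U` is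
invertible is factored by extending `L` and `U` by a factorization of the Schur complement
`D - C A⁻¹ B`; when `A` omits only the last row and column this complement is a `1 × 1` matrix and
factors trivially.
-/

section LU

open Matrix

theorem reindex_fromBlocks_submatrix {m n : ℕ} {α : Type*}
    (M : Matrix (Fin (m + n)) (Fin (m + n)) α) :
    reindex finSumFinEquiv finSumFinEquiv
      (fromBlocks (M.submatrix (Fin.castAdd n) (Fin.castAdd n))
        (M.submatrix (Fin.castAdd n) (Fin.natAdd m))
        (M.submatrix (Fin.natAdd m) (Fin.castAdd n))
        (M.submatrix (Fin.natAdd m) (Fin.natAdd m))) = M := by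
  rw [← Equiv.eq_symm_apply, ← fromBlocks_toBlocks ((reindex _ _).symm M)]
  rfl

section Zero

variable {R : Type*} [Zero R]

theorem isUpperTriangular_reindex_fromBlocks {m n : ℕ} {A : Matrix (Fin m) (Fin m) R}
    {D : Matrix (Fin n) (Fin n) R} (hA : A.IsUpperTriangular) (hD : D.IsUpperTriangular)
    (B : Matrix (Fin m) (Fin n) R) :
    (reindex finSumFinEquiv finSumFinEquiv (fromBlocks A B 0 D)).IsUpperTriangular := by
  refine blockTriangular_reindex_iff.mpr ?_
  rintro (i | i) (j | j) hji
  · exact hA ((Fin.strictMono_castAdd n).lt_iff_lt.mp hji)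
  · exact absurd (show m + (j : ℕ) < i from hji) (by omega)
  · rfl
  · exact hD ((Fin.strictMono_natAdd m).lt_iff_lt.mp hji)

theorem isLowerTriangular_reindex_fromBlocks {m n : ℕ} {A : Matrix (Fin m) (Fin m) R}
    {D : Matrix (Fin n) (Fin n) R} (hA : A.IsLowerTriangular) (hD : D.IsLowerTriangular)
    (C : Matrix (Fin n) (Fin m) R) :
    (reindex finSumFinEquiv finSumFinEquiv (fromBlocks A 0 C D)).IsLowerTriangular := by
  have h := isUpperTriangular_reindex_fromBlocks hA.transpose hD.transpose Cᵀ
  simpa [fromBlocks_transpose] using h.transpose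

end Zero

/-- `IsLUFactorization M L U` says that `M = L * U` is an LU factorization in Doolittle form: it is
the unit lower triangular factor `L` that carries the normalization. -/
structure IsLUFactorization {n R : Type*} [Fintype n] [LT n] [Semiring R]
    (M L U : Matrix n n R) : Prop where
  lower : L.IsLowerTriangular
  diag : ∀ i, L i i = 1
  upper : U.IsUpperTriangular
  eq_mul : M = L * U

theorem isLUFactorization_one_self {n R : Type*} [Fintype n] [LinearOrder n] [Semiring R]
    {U : Matrix n n R} (hU : U.IsUpperTriangular) : IsLUFactorization U 1 U where
  lower := blockTriangular_one
  diag := one_apply_eq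
  upper := hU
  eq_mul := (one_mul U).symm

variable {R : Type*} [CommRing R]

theorem IsLUFactorization.det_lower {n : Type*} [Fintype n] [LinearOrder n]
    {M L U : Matrix n n R} (h : IsLUFactorization M L U) : L.det = 1 := by
  rw [det_of_isLowerTriangular L h.lower, Finset.prod_congr rfl fun i _ => h.diag i,
    Finset.prod_const_one]

theorem fromBlocks_eq_mul_of_schur_eq_mul {m n : Type*} [Fintype m] [DecidableEq m] [Fintype n]
    {L U : Matrix m m R} (hL : IsUnit L.det) (hU : IsUnit U.det)
    (B : Matrix m n R) (C : Matrix n m R) {D L' U' : Matrix n n R}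
    (hD : D - C * (L * U)⁻¹ * B = L' * U') :
    fromBlocks (L * U) B C D =
      fromBlocks L 0 (C * U⁻¹) L' * fromBlocks U (L⁻¹ * B) 0 U' := by
  have hD' : C * U⁻¹ * (L⁻¹ * B) + L' * U' = D := by
    rw [← hD, Matrix.mul_inv_rev]
    simp only [Matrix.mul_assoc, add_sub_cancel]
  rw [fromBlocks_multiply, hD', mul_nonsing_inv_cancel_left _ _ hL,
    nonsing_inv_mul_cancel_right _ _ hU]
  simp only [Matrix.zero_mul, Matrix.mul_zero, add_zero]

theorem IsLUFactorization.reindex_fromBlocks {m n : ℕ} {A L U : Matrix (Fin m) (Fin m) R}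
    {D L' U' : Matrix (Fin n) (Fin n) R} (hA : IsLUFactorization A L U) (hdet : IsUnit A.det)
    (B : Matrix (Fin m) (Fin n) R) (C : Matrix (Fin n) (Fin m) R)
    (hD : IsLUFactorization (D - C * A⁻¹ * B) L' U') :
    IsLUFactorization (reindex finSumFinEquiv finSumFinEquiv (fromBlocks A B C D))
      (reindex finSumFinEquiv finSumFinEquiv (fromBlocks L 0 (C * U⁻¹) L'))
      (reindex finSumFinEquiv finSumFinEquiv (fromBlocks U (L⁻¹ * B) 0 U')) where
  lower := isLowerTriangular_reindex_fromBlocks hA.lower hD.lower _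
  diag := finSumFinEquiv.forall_congr_right.mp <| by
    rintro (i | i)
    · simpa using hA.diag i
    · simpa using hD.diag i
  upper := isUpperTriangular_reindex_fromBlocks hA.upper hD.upper _
  eq_mul := by
    have hL : IsUnit L.det := by simp only [hA.det_lower, isUnit_one]
    have hU : IsUnit U.det := by simpa [hA.eq_mul, hA.det_lower] using hdet
    obtain rfl := hA.eq_mul
    rw [fromBlocks_eq_mul_of_schur_eq_mul hL hU B C hD.eq_mul]
    simp only [reindex_apply, submatrix_mul_equiv]

theorem exists_isLUFactorization {n : ℕ} (M : Matrix (Fin n) (Fin n) R)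
    (hM : ∀ (r : ℕ) (h : r < n),
      IsUnit (M.submatrix (Fin.castLE h.le) (Fin.castLE h.le)).det) :
    ∃ L U, IsLUFactorization M L U := by
  induction n with
  | zero => exact ⟨1, M, isLUFactorization_one_self fun i => i.elim0⟩
  | succ n ih =>
    let A := M.submatrix (Fin.castAdd 1) (Fin.castAdd 1)
    let B := M.submatrix (Fin.castAdd 1) (Fin.natAdd n)
    let C := M.submatrix (Fin.natAdd n) (Fin.castAdd 1)
    let D := M.submatrix (Fin.natAdd n) (Fin.natAdd n)
    obtain ⟨L, U, hA⟩ := ih A fun r h => hM r (h.trans n.lt_succ_self)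
    have hdet : IsUnit A.det := hM n n.lt_succ_self
    have hschur : IsLUFactorization (D - C * A⁻¹ * B) 1 (D - C * A⁻¹ * B) :=
      isLUFactorization_one_self fun i j hji => absurd hji (by simp [Subsingleton.elim i j])
    have hLU := hA.reindex_fromBlocks hdet B C hschur
    rw [reindex_fromBlocks_submatrix] at hLU
    exact ⟨_, _, hLU⟩

end LU

/-- The position of an edge inside its twin star. Leg numbers are 0-based, and there is one
position for each of the `2d - 1` leg submatrices. -/
inductive StarPosition (d : ℕ)
  | center
  | left (n : Fin (d - 1))
  | right (n : Fin (d - 1))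

namespace StarPosition

variable {d : ℕ}

/-- The edge of `K_{2d}` at a given position of the twin star `TS_d(2a-1, 2a)` (0-based `a`). -/
def edge : StarPosition d → Fin d → EdgePair d
  | center, a => centerEdge a
  | left n, a => leftLeg a n
  | right n, a => rightLeg a n

/-- The position of an edge in the unique twin star containing it, which is the one numbered
`ind e`. -/
def ofEdge (e : EdgePair d) : StarPosition d :=
  have hij : (e.val.1 : ℕ) < e.val.2 := e.prop
  have hj : (e.val.2 : ℕ) < 2 * d := e.val.2.isLt
  if h1 : (e.val.1 : ℕ) % 2 = 0 then
    if h2 : (e.val.2 : ℕ) % 2 = 1 then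
      if h3 : (e.val.2 : ℕ) = e.val.1 + 1 then center
      else right ⟨e.val.1 / 2, by omega⟩
    else left ⟨e.val.2 / 2 - 1, by omega⟩
  else
    if h2 : (e.val.2 : ℕ) % 2 = 0 then left ⟨e.val.1 / 2, by omega⟩
    else right ⟨e.val.2 / 2 - 1, by omega⟩

@[simp]
theorem ind_edge (p : StarPosition d) (a : Fin d) : ind (p.edge a) = a := by
  cases p <;> grind [edge, centerEdge, leftLeg, rightLeg, mkEdge, ind, indF]

@[simp]
theorem ofEdge_edge (p : StarPosition d) (a : Fin d) : ofEdge (p.edge a) = p := by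
  cases p <;> grind [edge, centerEdge, leftLeg, rightLeg, mkEdge, ofEdge]

@[simp]
theorem edge_ofEdge_ind (e : EdgePair d) : (ofEdge e).edge (ind e) = e := by
  obtain ⟨⟨⟨i, hi⟩, ⟨j, hj⟩⟩, hij⟩ := e
  grind [edge, centerEdge, leftLeg, rightLeg, mkEdge, ofEdge, ind, indF]

theorem forall_edgePair_iff {P : EdgePair d → Prop} :
    (∀ e, P e) ↔ ∀ (p : StarPosition d) (a : Fin d), P (p.edge a) :=
  ⟨fun h p a => h (p.edge a), fun h e => edge_ofEdge_ind e ▸ h (ofEdge e) (ind e)⟩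

end StarPosition

section Legs

open StarPosition

variable {d : ℕ} {k : Type*}

/-- The leg submatrix of `A` at position `p`, uniformly for `legC`, `legL` and `legR`. -/
def legSubmatrix (A : Fin d → EdgePair d → k) (p : StarPosition d) : Matrix (Fin d) (Fin d) k :=
  Matrix.of fun r a => A r (p.edge a)

/-- The `d × d(2d-1)` matrix with prescribed leg submatrices. -/
def ofLegs (M : StarPosition d → Matrix (Fin d) (Fin d) k) : Fin d → EdgePair d → k :=
  fun r e => M (ofEdge e) r (ind e)

theorem legSubmatrix_ofLegs (M : StarPosition d → Matrix (Fin d) (Fin d) k)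
    (p : StarPosition d) : legSubmatrix (ofLegs M) p = M p := by
  ext r a
  simp only [legSubmatrix, ofLegs, Matrix.of_apply, ofEdge_edge, ind_edge]

variable [Field k]

theorem LIM_apply (A B : Fin d → EdgePair d → k) (r : Fin d) (e : EdgePair d) :
    LIM A B r e = (legSubmatrix A (ofEdge e) * legSubmatrix B (ofEdge e)) r (ind e) := by
  unfold LIM ofEdge ind indF
  split_ifs
  all_goals try first | rfl | omega
  -- For the central edge `LIM` reads the star number off the left endpoint, `ind` off the right.
  have hstar : (e.val.1 : ℕ) / 2 = e.val.2 / 2 := by omega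
  simp only [hstar]
  rfl

theorem legSubmatrix_LIM (A B : Fin d → EdgePair d → k) (p : StarPosition d) :
    legSubmatrix (LIM A B) p = legSubmatrix A p * legSubmatrix B p := by
  ext r a
  simp only [legSubmatrix, Matrix.of_apply, LIM_apply, ofEdge_edge, ind_edge]

theorem eq_LIM_iff {A L U : Fin d → EdgePair d → k} :
    A = LIM L U ↔ ∀ p, legSubmatrix A p = legSubmatrix L p * legSubmatrix U p := by
  simp only [← legSubmatrix_LIM]
  constructor
  · rintro rfl p
    rfl
  · intro h
    ext r e
    revert e
    exact forall_edgePair_iff.mpr fun p a => congrFun₂ (h p) r a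

theorem s2LowerTriangular_iff {A : Fin d → EdgePair d → k} :
    S2LowerTriangular A ↔ ∀ p, (legSubmatrix A p).IsLowerTriangular := by
  simp only [S2LowerTriangular, forall_edgePair_iff, ind_edge]
  exact forall_comm

theorem s2UpperTriangular_iff {A : Fin d → EdgePair d → k} :
    S2UpperTriangular A ↔ ∀ p, (legSubmatrix A p).IsUpperTriangular := by
  simp only [S2UpperTriangular, forall_edgePair_iff, ind_edge]
  exact forall_comm

theorem s2_LU_decomposition_general (A : Fin d → EdgePair d → k)
    (hA : ∀ (p : StarPosition d) (r : ℕ), 1 ≤ r → ∀ h : r < d,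
      ((legSubmatrix A p).submatrix (Fin.castLE h.le) (Fin.castLE h.le)).det ≠ 0) :
    ∃ L U : Fin d → EdgePair d → k,
      S2LowerTriangular L ∧ (∀ e : EdgePair d, L (ind e) e = 1) ∧
      S2UpperTriangular U ∧ A = LIM L U := by
  have hminors (p : StarPosition d) (r : ℕ) (h : r < d) :
      IsUnit ((legSubmatrix A p).submatrix (Fin.castLE h.le) (Fin.castLE h.le)).det := by
    obtain rfl | hr := r.eq_zero_or_pos
    · simp
    · exact (hA p r hr h).isUnit
  choose L U hLU using fun p => exists_isLUFactorization (legSubmatrix A p) (hminors p)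
  refine ⟨ofLegs L, ofLegs U, ?_, fun e => (hLU (ofEdge e)).diag (ind e), ?_, ?_⟩
  · simpa only [s2LowerTriangular_iff, legSubmatrix_ofLegs] using fun p => (hLU p).lower
  · simpa only [s2UpperTriangular_iff, legSubmatrix_ofLegs] using fun p => (hLU p).upper
  · simpa only [eq_LIM_iff, legSubmatrix_ofLegs] using fun p => (hLU p).eq_mul

end Legs

/-- S²-LU decomposition: if every leg submatrix of A has all leading principal minors
nonzero, then A = L ⊙ U with L an S²-lower triangular matrix whose S²-diagonal entries
all equal 1 and U an S²-upper triangular matrix. -/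
theorem s2_LU_decomposition (k : Type*) [Field k] (d : ℕ) (hd : 1 ≤ d)
    (A : Fin d → EdgePair d → k)
    (hC : LeadingMinorsNonzero (legC A))
    (hL : ∀ n : Fin (d-1), LeadingMinorsNonzero (legL A n))
    (hR : ∀ n : Fin (d-1), LeadingMinorsNonzero (legR A n)) :
    ∃ L U : Fin d → EdgePair d → k,
      S2LowerTriangular L ∧ (∀ e : EdgePair d, L (ind e) e = 1) ∧
      S2UpperTriangular U ∧ A = LIM L U := by
  refine s2_LU_decomposition_general A ?_
  rintro (_ | n | n) r hr h
  exacts [hC r hr h.le, hL n r hr h.le, hR n r hr h.le]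
end
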